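/- arXiv:2509.04271 — 3 statements merged into one kernel-verified Lean document; each statement's English description precedes it below -/
import Mathlib

section
/- Let G be a group, let A, B ⊆ G be nonempty finite sets, let N > 0 be real, and let ε ∈ (0,1). If d = VC^ℓ_B(A) is finite and ε ≤ N/|BA|, then cov(B : Stab^ℓ_N(A) ∩ B⁻¹B) ≤ (30/ε)^d; that is, there exists E ⊆ B with |E| ≤ (30/ε)^d such that B ⊆ E·(Stab^ℓ_N(A) ∩ B⁻¹B). -/
open scoped Pointwise symmDiff

/-- `Stab^ℓ_N(A) = {x : |xA △ A| ≤ N}`. -/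
def stabL {G : Type*} [Group G] (A : Set G) (N : ℝ) : Set G :=
  {x : G | (((x • A) ∆ A).ncard : ℝ) ≤ N}

/-- `Stab^r_N(A) = {x : |Ax △ A| ≤ N}`. -/
def stabR {G : Type*} [Group G] (A : Set G) (N : ℝ) : Set G :=
  {x : G | (((A * {x}) ∆ A).ncard : ℝ) ≤ N}

/-- `St^ℓ_ε(A) = Stab^ℓ_{ε|A|}(A)`. -/
def stL {G : Type*} [Group G] (A : Set G) (ε : ℝ) : Set G := stabL A (ε * A.ncard)

/-- `St^r_ε(A) = Stab^r_{ε|A|}(A)`. -/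
def stR {G : Type*} [Group G] (A : Set G) (ε : ℝ) : Set G := stabR A (ε * A.ncard)

/-- A family of sets shatters `S` if every subset of `S` is cut out by a member of the family. -/
def Shatters {α : Type*} (F : Set (Set α)) (S : Set α) : Prop :=
  ∀ T ⊆ S, ∃ f ∈ F, S ∩ f = T

/-- VC-dimension of a set system: the supremum of cardinalities of finite shattered sets. -/
noncomputable def vcDim {α : Type*} (F : Set (Set α)) : ℕ∞ :=
  ⨆ (S : Finset α) (_ : Shatters F ↑S), (S.card : ℕ∞)

/-- The family of left translates `{xA : x ∈ B}`. -/
def leftFam {G : Type*} [Group G] (A B : Set G) : Set (Set G) := (fun x => x • A) '' B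

/-- The family of right translates `{Ax : x ∈ B}`. -/
def rightFam {G : Type*} [Group G] (A B : Set G) : Set (Set G) := (fun x => A * {x}) '' B

/-- `Z^ℓ_ε(A,X) = {g : min(|gX ∩ A|, |gX \ A|) ≥ ε|X|}`. -/
def Zl {G : Type*} [Group G] (A X : Set G) (ε : ℝ) : Set G :=
  {g : G | ε * X.ncard ≤ min (((g • X) ∩ A).ncard : ℝ) (((g • X) \ A).ncard : ℝ)}




theorem hp_edges {α : Type*} [DecidableEq α] (T : Finset α) :
    ∀ (d : ℕ) (w : Finset α → ℕ),
    (∀ S ⊆ T, (∀ R ⊆ S, ∃ v ⊆ T, w v ≠ 0 ∧ S ∩ v = R) → S.card ≤ d) →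
    ∑ i ∈ T, ∑ v ∈ (T.erase i).powerset, min (w v) (w (insert i v))
      ≤ d * ∑ v ∈ T.powerset, w v := by
  induction T using Finset.induction_on with
  | empty => intro d w _; simp
  | insert x T hx ih =>
    intro d w h
    have hU := ih d (fun v => max (w v) (w (insert x v))) (by
      intro S hS hsh
      apply h S (hS.trans (Finset.subset_insert _ _))
      intro R hR
      obtain ⟨v, hv, hw, hSv⟩ := hsh R hR
      have hxS : x ∉ S := fun h => hx (hS h)
      by_cases h0 : w v = 0
      · refine ⟨insert x v, Finset.insert_subset_insert _ hv, ?_, ?_⟩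
        · intro h1; apply hw; simp [h0, h1]
        · rw [Finset.inter_insert_of_notMem hxS, hSv]
      · exact ⟨v, hv.trans (Finset.subset_insert _ _), h0, hSv⟩)
    have hI' : ∀ S ⊆ T, (∀ R ⊆ S, ∃ v ⊆ T, min (w v) (w (insert x v)) ≠ 0 ∧ S ∩ v = R) →
        S.card + 1 ≤ d := by
      intro S hS hsh
      have hxS : x ∉ S := fun h => hx (hS h)
      rw [← Finset.card_insert_of_notMem hxS]
      apply h _ (Finset.insert_subset_insert _ hS)
      intro R hR
      obtain ⟨v, hv, hw, hSv⟩ := hsh (R.erase x) (by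
        intro y hy
        have := hR (Finset.mem_of_mem_erase hy)
        have := Finset.ne_of_mem_erase hy
        grind)
      have hxv : x ∉ v := fun h => hx (hv h)
      have h1 : w v ≠ 0 := by intro h; simp [h] at hw
      have h2 : w (insert x v) ≠ 0 := by intro h; simp [h] at hw
      by_cases hxR : x ∈ R
      · refine ⟨insert x v, Finset.insert_subset_insert _ hv, h2, ?_⟩
        rw [← Finset.insert_inter_distrib, hSv, Finset.insert_erase hxR]
      · refine ⟨v, hv.trans (Finset.subset_insert _ _), h1, ?_⟩
        rw [Finset.insert_inter_of_notMem hxv, hSv, Finset.erase_eq_of_notMem hxR]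
    have hI := ih (d - 1) (fun v => min (w v) (w (insert x v))) (by
      intro S hS hsh
      have := hI' S hS hsh
      omega)
    have hsum : ∑ v ∈ (insert x T).powerset, w v
        = ∑ v ∈ T.powerset, max (w v) (w (insert x v))
          + ∑ v ∈ T.powerset, min (w v) (w (insert x v)) := by
      rw [Finset.sum_powerset_insert hx, ← Finset.sum_add_distrib, ← Finset.sum_add_distrib]
      exact Finset.sum_congr rfl fun v _ => (max_add_min _ _).symm
    have hd : (d - 1) * ∑ v ∈ T.powerset, min (w v) (w (insert x v))
        + ∑ v ∈ T.powerset, min (w v) (w (insert x v))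
        ≤ d * ∑ v ∈ T.powerset, min (w v) (w (insert x v)) := by
      by_cases h0 : ∑ v ∈ T.powerset, min (w v) (w (insert x v)) = 0
      · simp [h0]
      · obtain ⟨v, hv, hv0⟩ := Finset.exists_ne_zero_of_sum_ne_zero h0
        have h1 := hI' ∅ (Finset.empty_subset _) (by
          intro R hR
          exact ⟨v, Finset.mem_powerset.1 hv, hv0, by
            rw [Finset.subset_empty.1 hR]; simp⟩)
        obtain ⟨e, rfl⟩ : ∃ e, d = e + 1 := ⟨d - 1, by simp at h1; omega⟩
        simp; linarith
    rw [Finset.sum_insert hx, Finset.erase_insert hx, hsum]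
    have hE : ∑ i ∈ T, ∑ v ∈ ((insert x T).erase i).powerset, min (w v) (w (insert i v))
        ≤ ∑ i ∈ T, ∑ v ∈ (T.erase i).powerset,
            min (max (w v) (w (insert x v))) (max (w (insert i v)) (w (insert x (insert i v))))
          + ∑ i ∈ T, ∑ v ∈ (T.erase i).powerset,
            min (min (w v) (w (insert x v))) (min (w (insert i v)) (w (insert x (insert i v)))) := by
      rw [← Finset.sum_add_distrib]
      apply Finset.sum_le_sum
      intro i hi
      have hne : x ≠ i := fun h => hx (h ▸ hi)
      rw [Finset.erase_insert_of_ne hne, Finset.sum_powerset_insert (by simp [hx]),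
        ← Finset.sum_add_distrib, ← Finset.sum_add_distrib]
      apply Finset.sum_le_sum
      intro v _
      rw [Finset.insert_comm i x v]
      omega
    rw [mul_add]
    omega

theorem hp_sauer {s d : ℕ} (𝒜 : Finset (Finset (Fin s)))
    (h : ∀ S, 𝒜.Shatters S → S.card ≤ d) :
    𝒜.card ≤ ∑ k ∈ Finset.Iic d, s.choose k := by
  refine (Finset.card_le_card_shatterer 𝒜).trans ?_
  refine Finset.card_shatterer_le_sum_vcDim.trans ?_
  rw [Fintype.card_fin]
  apply Finset.sum_le_sum_of_subset
  apply Finset.Iic_subset_Iic.2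
  apply Finset.sup_le
  intro S hS
  exact h S (Finset.mem_shatterer.1 hS)

theorem hp_class {ι X : Type*} [Fintype X] [DecidableEq ι] (r : ι → X → Prop)
    [∀ a z, Decidable (r a z)] (C : Finset ι) (hC : C.Nonempty) (D : ℝ)
    (hsep : ∀ a ∈ C, ∀ b ∈ C, a ≠ b →
      D ≤ ((Finset.univ.filter fun z => ¬ (r a z ↔ r b z)).card : ℝ)) :
    D / 2 * ((C.card : ℝ) - 1) ≤
      ∑ z, (min (C.filter fun a => ¬ r a z).card (C.filter fun a => r a z).card : ℕ) := by
  have h1 : ∀ z, 2 * ((C.filter fun a => ¬ r a z).card * (C.filter fun a => r a z).card)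
      ≤ 2 * (C.card * min (C.filter fun a => ¬ r a z).card (C.filter fun a => r a z).card) := by
    intro z
    rw [← Finset.card_filter_add_card_filter_not (s := C) (fun a => r a z)]
    generalize (C.filter fun a => ¬ r a z).card = p
    generalize (C.filter fun a => r a z).card = q
    rcases le_total p q with h | h
    · rw [min_eq_left h]; nlinarith
    · rw [min_eq_right h]; nlinarith
  have h2 : ∀ z, 2 * ((C.filter fun a => ¬ r a z).card * (C.filter fun a => r a z).card)
      = ∑ p ∈ C.offDiag, if ¬ (r p.1 z ↔ r p.2 z) then 1 else 0 := by
    intro z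
    rw [← Finset.card_filter]
    have : C.offDiag.filter (fun p => ¬ (r p.1 z ↔ r p.2 z))
      = ((C.filter fun a => ¬ r a z) ×ˢ (C.filter fun a => r a z)) ∪
        ((C.filter fun a => r a z) ×ˢ (C.filter fun a => ¬ r a z)) := by
      ext ⟨a, b⟩
      simp only [Finset.mem_filter, Finset.mem_offDiag, Finset.mem_union, Finset.mem_product]
      constructor
      · rintro ⟨⟨ha, hb, _⟩, h⟩; tauto
      · intro h
        refine ⟨⟨by tauto, by tauto, ?_⟩, by tauto⟩
        rintro rfl; tauto
    rw [this, Finset.card_union_of_disjoint, Finset.card_product, Finset.card_product]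
    · ring
    · rw [Finset.disjoint_left]
      rintro ⟨a, b⟩ h h'
      simp only [Finset.mem_filter, Finset.mem_product] at h h'
      tauto
  have h3 : ∑ z, 2 * ((C.filter fun a => ¬ r a z).card * (C.filter fun a => r a z).card)
      = ∑ p ∈ C.offDiag, (Finset.univ.filter fun z => ¬ (r p.1 z ↔ r p.2 z)).card := by
    rw [Finset.sum_congr rfl fun z _ => h2 z, Finset.sum_comm]
    exact Finset.sum_congr rfl fun p _ => (Finset.card_filter _ _).symm
  have h4 : (C.offDiag.card : ℝ) * D ≤
      ((∑ p ∈ C.offDiag, (Finset.univ.filter fun z => ¬ (r p.1 z ↔ r p.2 z)).card : ℕ) : ℝ) := by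
    rw [← nsmul_eq_mul, Nat.cast_sum]
    apply Finset.card_nsmul_le_sum
    rintro ⟨a, b⟩ hp
    rw [Finset.mem_offDiag] at hp
    exact hsep a hp.1 b hp.2.1 hp.2.2
  have h5 : (C.offDiag.card : ℝ) = C.card * (C.card - 1) := by
    rw [Finset.offDiag_card, Nat.cast_sub (Nat.le_mul_self _)]; push_cast; ring
  have h6 := Finset.sum_le_sum fun z (_ : z ∈ Finset.univ) => h1 z
  rw [h3, ← Finset.mul_sum, ← Finset.mul_sum] at h6
  have h7 : ((∑ p ∈ C.offDiag, (Finset.univ.filter fun z => ¬ (r p.1 z ↔ r p.2 z)).card : ℕ) : ℝ)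
      ≤ 2 * (C.card * ((∑ z, (min (C.filter fun a => ¬ r a z).card
        (C.filter fun a => r a z).card) : ℕ) : ℝ)) := by exact_mod_cast h6
  have hc : (0 : ℝ) < C.card := by exact_mod_cast hC.card_pos
  rw [h5] at h4
  refine le_of_mul_le_mul_left ?_ hc
  nlinarith

theorem hp_update {X : Type*} [Fintype X] {s : ℕ} (i : Fin s) (F : (Fin s → X) → ℝ) :
    ∑ x, ∑ z, F (Function.update x i z) = Fintype.card X * ∑ x, F x := by
  classical
  have hinv : Function.Involutive
      (fun p : (Fin s → X) × X => (Function.update p.1 i p.2, p.1 i)) := by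
    rintro ⟨x, z⟩; simp
  rw [← Fintype.sum_prod_type' (f := fun x z => F (Function.update x i z))]
  rw [Fintype.sum_equiv hinv.toPerm (fun p => F (Function.update p.1 i p.2)) (fun p => F p.1)
    (fun p => rfl)]
  rw [Fintype.sum_prod_type]
  simp [Finset.mul_sum]

/-- Trace of `r a` on the sample `x`. -/
def hpProj {ι X : Type*} {s : ℕ} (r : ι → X → Prop) [∀ a z, Decidable (r a z)]
    (x : Fin s → X) (a : ι) : Finset (Fin s) := Finset.univ.filter fun j => r a (x j)

/-- Number of members of `E` with given trace. -/
def hpW {ι X : Type*} {s : ℕ} (r : ι → X → Prop) [∀ a z, Decidable (r a z)] (E : Finset ι)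
    (x : Fin s → X) (v : Finset (Fin s)) : ℕ := (E.filter fun a => hpProj r x a = v).card

theorem hp_shat {ι X : Type*} {s d : ℕ} (r : ι → X → Prop) [∀ a z, Decidable (r a z)]
    (E : Finset ι)
    (hvc : ∀ S : Finset X, (∀ R ⊆ S, ∃ a ∈ E, ∀ z ∈ S, (r a z ↔ z ∈ R)) → S.card ≤ d)
    (x : Fin s → X) (S : Finset (Fin s)) (hS : ∀ R ⊆ S, ∃ a ∈ E, S ∩ hpProj r x a = R) :
    S.card ≤ d := by
  classical
  have key : ∀ R ⊆ S, ∃ a ∈ E, ∀ j ∈ S, (r a (x j) ↔ j ∈ R) := by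
    intro R hR
    obtain ⟨a, ha, h⟩ := hS R hR
    refine ⟨a, ha, fun j hj => ?_⟩
    rw [← h]; simp [hpProj, hj]
  have hinj : Set.InjOn x S := by
    intro j hj k hk hjk
    by_contra hne
    obtain ⟨a, ha, h⟩ := key {j} (by simpa using hj)
    have h1 := h j hj
    have h2 := h k hk
    rw [← hjk] at h2
    have : k ∈ ({j} : Finset (Fin s)) := h2.1 (h1.2 (by simp))
    simp at this
    exact hne this.symm
  rw [← Finset.card_image_of_injOn hinj]
  apply hvc
  intro R hR
  obtain ⟨a, ha, h⟩ := key (S.filter fun j => x j ∈ R) (Finset.filter_subset _ _)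
  refine ⟨a, ha, fun z hz => ?_⟩
  obtain ⟨j, hj, rfl⟩ := Finset.mem_image.1 hz
  rw [h j hj]; simp [hj]

theorem hp_fix {ι X : Type*} [Fintype X] [DecidableEq ι] {s : ℕ} (r : ι → X → Prop)
    [∀ a z, Decidable (r a z)] (E : Finset ι) (D : ℝ) (hD : 0 ≤ D)
    (hsep : ∀ a ∈ E, ∀ b ∈ E, a ≠ b →
      D ≤ ((Finset.univ.filter fun z => ¬ (r a z ↔ r b z)).card : ℝ))
    (x : Fin s → X) (i : Fin s) :
    D / 2 * ((E.card : ℝ) - (E.image (hpProj r x)).card) ≤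
      ∑ z, ((∑ v ∈ (Finset.univ.erase i).powerset,
        min (hpW r E (Function.update x i z) v) (hpW r E (Function.update x i z) (insert i v)) :
          ℕ) : ℝ) := by
  set c := E.image (fun a => (hpProj r x a).erase i) with hc
  have hcc : c.card ≤ (E.image (hpProj r x)).card := by
    have : c = (E.image (hpProj r x)).image (fun v => v.erase i) := by
      rw [Finset.image_image]; rfl
    rw [this]; exact Finset.card_image_le
  have hcp : c ⊆ (Finset.univ.erase i).powerset := by
    intro v hv
    obtain ⟨a, _, rfl⟩ := Finset.mem_image.1 hv
    exact Finset.mem_powerset.2 (Finset.erase_subset_erase _ (Finset.subset_univ _))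
  have hupd : ∀ a z j, j ∈ hpProj r (Function.update x i z) a ↔
      (j = i ∧ r a z ∨ j ≠ i ∧ j ∈ hpProj r x a) := by
    intro a z j
    by_cases hj : j = i
    · subst hj; simp [hpProj]
    · simp [hpProj, hj]
  have hw0 : ∀ v ∈ c, ∀ z, hpW r E (Function.update x i z) v =
      ((E.filter fun a => (hpProj r x a).erase i = v).filter fun a => ¬ r a z).card := by
    intro v hv z
    have hiv : i ∉ v := fun h => by simpa using Finset.mem_powerset.1 (hcp hv) h
    unfold hpW
    rw [Finset.filter_filter]
    congr 1
    apply Finset.filter_congr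
    intro a _
    simp only [Finset.ext_iff, hupd, Finset.mem_erase]
    constructor
    · intro h
      refine ⟨fun j => ?_, fun hr => hiv ((h i).1 (Or.inl ⟨rfl, hr⟩))⟩
      have := h j
      by_cases hj : j = i
      · subst hj; simp [hiv]
      · simpa [hj] using this
    · rintro ⟨h, hr⟩ j
      rw [← h j]; tauto
  have hw1 : ∀ v ∈ c, ∀ z, hpW r E (Function.update x i z) (insert i v) =
      ((E.filter fun a => (hpProj r x a).erase i = v).filter fun a => r a z).card := by
    intro v hv z
    have hiv : i ∉ v := fun h => by simpa using Finset.mem_powerset.1 (hcp hv) h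
    unfold hpW
    rw [Finset.filter_filter]
    congr 1
    apply Finset.filter_congr
    intro a _
    simp only [Finset.ext_iff, hupd, Finset.mem_erase, Finset.mem_insert]
    constructor
    · intro h
      refine ⟨fun j => ?_, ?_⟩
      · have := h j
        by_cases hj : j = i
        · subst hj; simp [hiv]
        · simpa [hj] using this
      · simpa using h i
    · rintro ⟨h, hr⟩ j
      rw [← h j]; tauto
  have hE : (E.card : ℝ) = ∑ v ∈ c, ((E.filter fun a => (hpProj r x a).erase i = v).card : ℝ) := by
    rw [Finset.card_eq_sum_card_image (fun a => (hpProj r x a).erase i) E]; push_cast; rfl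
  calc D / 2 * ((E.card : ℝ) - (E.image (hpProj r x)).card)
      ≤ D / 2 * ((E.card : ℝ) - c.card) := by
        apply mul_le_mul_of_nonneg_left _ (by linarith)
        have : (c.card : ℝ) ≤ (E.image (hpProj r x)).card := by exact_mod_cast hcc
        linarith
    _ = ∑ v ∈ c, D / 2 * (((E.filter fun a => (hpProj r x a).erase i = v).card : ℝ) - 1) := by
        rw [← Finset.mul_sum, Finset.sum_sub_distrib, ← hE]; simp
    _ ≤ ∑ v ∈ c, ((∑ z, min (hpW r E (Function.update x i z) v)
          (hpW r E (Function.update x i z) (insert i v)) : ℕ) : ℝ) := by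
        apply Finset.sum_le_sum
        intro v hv
        have := hp_class r (E.filter fun a => (hpProj r x a).erase i = v) (by
          obtain ⟨a, ha, hav⟩ := Finset.mem_image.1 hv
          exact ⟨a, Finset.mem_filter.2 ⟨ha, hav⟩⟩) D (by
          intro a ha b hb hab
          exact hsep a (Finset.mem_filter.1 ha).1 b (Finset.mem_filter.1 hb).1 hab)
        simpa only [hw0 v hv, hw1 v hv] using this
    _ = ∑ z, ((∑ v ∈ c, min (hpW r E (Function.update x i z) v)
          (hpW r E (Function.update x i z) (insert i v)) : ℕ) : ℝ) := by
        rw [← Nat.cast_sum, ← Nat.cast_sum, Finset.sum_comm]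
    _ ≤ _ := by
        apply Finset.sum_le_sum
        intro z _
        exact_mod_cast Finset.sum_le_sum_of_subset hcp

theorem hp_main {ι X : Type*} [Fintype X] [Nonempty X] [DecidableEq ι] (s d : ℕ)
    (r : ι → X → Prop) [∀ a z, Decidable (r a z)] (E : Finset ι) (δ : ℝ) (hδ : 0 ≤ δ)
    (hsep : ∀ a ∈ E, ∀ b ∈ E, a ≠ b →
      δ * Fintype.card X ≤ ((Finset.univ.filter fun z => ¬ (r a z ↔ r b z)).card : ℝ))
    (hvc : ∀ S : Finset X, (∀ R ⊆ S, ∃ a ∈ E, ∀ z ∈ S, (r a z ↔ z ∈ R)) → S.card ≤ d) :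
    s * δ / 2 * ((E.card : ℝ) - ((∑ k ∈ Finset.Iic d, s.choose k : ℕ) : ℝ)) ≤ d * E.card := by
  classical
  set n : ℝ := (Fintype.card X : ℝ) with hn
  have hnpos : 0 < n := by rw [hn]; exact_mod_cast Fintype.card_pos
  set Φ : ℝ := ((∑ k ∈ Finset.Iic d, s.choose k : ℕ) : ℝ) with hΦ
  let F : Fin s → (Fin s → X) → ℝ := fun i x => ((∑ v ∈ (Finset.univ.erase i).powerset,
        min (hpW r E x v) (hpW r E x (insert i v)) : ℕ) : ℝ)
  have hup : ∀ x, ∑ i, F i x ≤ d * E.card := by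
    intro x
    have h := hp_edges (Finset.univ : Finset (Fin s)) d (hpW r E x) (by
      intro S _ hS
      apply hp_shat r E hvc x S
      intro R hR
      obtain ⟨v, _, hv, h⟩ := hS R hR
      obtain ⟨a, ha⟩ := Finset.card_ne_zero.1 hv
      rw [Finset.mem_filter] at ha
      exact ⟨a, ha.1, by rw [ha.2, h]⟩)
    have hs : ∑ v ∈ (Finset.univ : Finset (Fin s)).powerset, hpW r E x v = E.card := by
      unfold hpW
      exact (Finset.card_eq_sum_card_fiberwise (fun a _ => by simp)).symm
    rw [hs] at h
    simp only [F]
    exact_mod_cast h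
  have hlow : ∀ i x, δ * n / 2 * (E.card - Φ) ≤ ∑ z, F i (Function.update x i z) := by
    intro i x
    refine le_trans ?_ (hp_fix r E (δ * n) (by positivity) hsep x i)
    apply mul_le_mul_of_nonneg_left _ (by positivity)
    have : (((E.image (hpProj r x)).card : ℕ) : ℝ) ≤ Φ := by
      rw [hΦ]
      exact_mod_cast hp_sauer _ (by
        intro S hS
        apply hp_shat r E hvc x S
        intro R hR
        obtain ⟨v, hv, h⟩ := hS hR
        obtain ⟨a, ha, rfl⟩ := Finset.mem_image.1 hv
        exact ⟨a, ha, h⟩)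
    linarith
  set M : ℝ := (Fintype.card (Fin s → X) : ℝ) with hM
  have hMpos : 0 < M := by rw [hM]; exact_mod_cast Fintype.card_pos
  have h1 : ∀ i, M * (δ * n / 2 * (E.card - Φ)) ≤ n * ∑ x, F i x := by
    intro i
    rw [hn, ← hp_update i (F i)]
    have := Finset.card_nsmul_le_sum Finset.univ _ _ (fun x _ => hlow i x)
    rwa [nsmul_eq_mul] at this
  have h2 : s * (M * (δ * n / 2 * (E.card - Φ))) ≤ n * (M * (d * E.card)) := by
    calc s * (M * (δ * n / 2 * (E.card - Φ)))
        = ∑ i : Fin s, (M * (δ * n / 2 * (E.card - Φ))) := by simp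
      _ ≤ ∑ i : Fin s, n * ∑ x, F i x := Finset.sum_le_sum fun i _ => h1 i
      _ = n * ∑ x, ∑ i, F i x := by rw [← Finset.mul_sum, Finset.sum_comm]
      _ ≤ n * (M * (d * E.card)) := by
        apply mul_le_mul_of_nonneg_left _ hnpos.le
        have := Finset.sum_le_card_nsmul Finset.univ _ _ (fun x _ => hup x)
        rwa [nsmul_eq_mul] at this
  refine le_of_mul_le_mul_left ?_ (mul_pos hnpos hMpos)
  linarith

theorem hp_binom (s d : ℕ) (hd : 0 < d) (hs : d ≤ s) :
    ((∑ k ∈ Finset.Iic d, s.choose k : ℕ) : ℝ) ≤ (Real.exp 1 * (s / d)) ^ d := by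
  have hd' : (0 : ℝ) < d := by exact_mod_cast hd
  have hs' : (0 : ℝ) < s := by exact_mod_cast hd.trans_le hs
  have hq1 : (d : ℝ) / s ≤ 1 := by rw [div_le_one hs']; exact_mod_cast hs
  have h : ((∑ k ∈ Finset.Iic d, s.choose k : ℕ) : ℝ) * (d / s : ℝ) ^ d ≤ Real.exp 1 ^ d := by
    calc ((∑ k ∈ Finset.Iic d, s.choose k : ℕ) : ℝ) * (d / s : ℝ) ^ d
        = ∑ k ∈ Finset.Iic d, (s.choose k : ℝ) * (d / s : ℝ) ^ d := by
          push_cast; rw [Finset.sum_mul]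
      _ ≤ ∑ k ∈ Finset.Iic d, (s.choose k : ℝ) * (d / s : ℝ) ^ k := by
          apply Finset.sum_le_sum
          intro k hk
          apply mul_le_mul_of_nonneg_left _ (by positivity)
          exact pow_le_pow_of_le_one (by positivity) hq1 (Finset.mem_Iic.1 hk)
      _ ≤ ∑ k ∈ Finset.range (s + 1), (s.choose k : ℝ) * (d / s : ℝ) ^ k := by
          apply Finset.sum_le_sum_of_subset_of_nonneg
          · intro k hk; simp at hk ⊢; omega
          · intros; positivity
      _ = (d / s + 1 : ℝ) ^ s := by
          rw [add_pow]; apply Finset.sum_congr rfl; intros; simp; ring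
      _ ≤ Real.exp (d / s) ^ s := by
          gcongr; exact Real.add_one_le_exp _
      _ = Real.exp 1 ^ d := by
          rw [← Real.exp_nat_mul, ← Real.exp_nat_mul]; congr 1; field_simp
  rw [mul_pow, div_pow]
  rw [div_pow] at h
  rw [← mul_div_assoc, div_le_iff₀ (by positivity)] at h
  rw [← mul_div_assoc, le_div_iff₀ (by positivity)]
  exact h

theorem hp_final (d : ℕ) (ε e : ℝ) (h0 : 0 < ε) (h1 : ε < 1) (he : 0 ≤ e)
    (h : ∀ s : ℕ, s * ε / 2 * (e - ((∑ k ∈ Finset.Iic d, s.choose k : ℕ) : ℝ)) ≤ d * e) :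
    e ≤ (30 / ε) ^ d := by
  set s := ⌈2 * (d + 1) / ε⌉₊ with hs
  have hs1 : 2 * (d + 1) / ε ≤ s := Nat.le_ceil _
  have hs2 : (s : ℝ) < 2 * (d + 1) / ε + 1 := Nat.ceil_lt_add_one (by positivity)
  have hT : (d : ℝ) + 1 ≤ s * ε / 2 := by
    rw [div_le_iff₀ h0] at hs1; linarith
  have hb : e ≤ (d + 1) * ((∑ k ∈ Finset.Iic d, s.choose k : ℕ) : ℝ) := by
    have hh := h s
    generalize ((∑ k ∈ Finset.Iic d, s.choose k : ℕ) : ℝ) = Φ at hh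
    rcases le_total e Φ with hle | hle
    · have : (0:ℝ) ≤ d := Nat.cast_nonneg d
      nlinarith
    · nlinarith
  rcases Nat.eq_zero_or_pos d with hd | hd
  · have hz : ∑ k ∈ Finset.Iic d, s.choose k = 1 := by
      have h00 : Finset.Iic (0 : ℕ) = {0} := by decide
      rw [hd, h00, Finset.sum_singleton, Nat.choose_zero_right]
    rw [hz] at hb
    simpa [hd] using hb
  · have hd' : (1 : ℝ) ≤ d := by exact_mod_cast hd
    have hds : d ≤ s := by
      have : (d : ℝ) ≤ s := by nlinarith [Nat.cast_nonneg (α := ℝ) s]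
      exact_mod_cast this
    have hbin := hp_binom s d hd hds
    have h5 : (s : ℝ) / d ≤ 5 / ε := by
      rw [div_le_div_iff₀ (by linarith) h0]
      have : s * ε < 2 * (d + 1) + ε := by
        have := mul_lt_mul_of_pos_right hs2 h0
        rwa [add_mul, div_mul_cancel₀ _ h0.ne', one_mul] at this
      linarith
    have h2 : (d : ℝ) + 1 ≤ 2 ^ d := by exact_mod_cast Nat.lt_two_pow_self (n := d)
    have hexp : Real.exp 1 ≤ 3 := by linarith [Real.exp_one_lt_d9]
    calc e ≤ (d + 1) * ((∑ k ∈ Finset.Iic d, s.choose k : ℕ) : ℝ) := hb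
      _ ≤ 2 ^ d * (Real.exp 1 * (s / d)) ^ d := by gcongr
      _ ≤ 2 ^ d * (3 * (5 / ε)) ^ d := by gcongr
      _ = (30 / ε) ^ d := by rw [← mul_pow]; congr 1; ring

theorem hp_stab {G : Type*} [Group G] (A : Set G) (e b : G) :
    (((e⁻¹ * b) • A) ∆ A).ncard = ((e • A) ∆ (b • A)).ncard := by
  have : (e • A) ∆ (b • A) = e • (((e⁻¹ * b) • A) ∆ A) := by
    rw [Set.smul_set_symmDiff, smul_smul, mul_inv_cancel_left, symmDiff_comm]
  rw [this, Set.ncard_smul_set]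

/-- Haussler packing bound for covering `B` by translates of
`Stab^ℓ_N(A) ∩ B⁻¹B` (Proposition 2.10(a) of the paper). -/
theorem cov_stabL {G : Type*} [Group G] (A B : Set G)
    (hA : A.Finite) (hAne : A.Nonempty) (hB : B.Finite) (hBne : B.Nonempty)
    (N : ℝ) (hN : 0 < N) (ε : ℝ) (hε0 : 0 < ε) (hε1 : ε < 1)
    (d : ℕ) (hd : vcDim (leftFam A B) = (d : ℕ∞))
    (hεN : ε ≤ N / ((B * A).ncard : ℝ)) :
    ∃ E ⊆ B, E.Finite ∧ (E.ncard : ℝ) ≤ (30 / ε) ^ d ∧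
      B ⊆ E * (stabL A N ∩ (B⁻¹ * B)) := by
  classical
  -- maximal separated subset
  let Good : Set G → Prop := fun E => E ⊆ B ∧
    ∀ a ∈ E, ∀ b ∈ E, a ≠ b → N < (((a • A) ∆ (b • A)).ncard : ℝ)
  obtain ⟨E, hEmax⟩ : ∃ E, Maximal Good E := by
    have hfin : {E | Good E}.Finite := hB.finite_subsets.subset fun E hE => hE.1
    exact hfin.exists_maximal ⟨∅, by simp [Good]⟩
  have hEB : E ⊆ B := hEmax.prop.1
  have hEsep := hEmax.prop.2
  have hEfin : E.Finite := hB.subset hEB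
  refine ⟨E, hEB, hEfin, ?_, ?_⟩
  · have hX : (B * A).Finite := hB.mul hA
    haveI : Fintype ↥(B * A) := hX.fintype
    haveI : Nonempty ↥(B * A) := (hBne.mul hAne).to_subtype
    have hcard : ((B * A).ncard : ℝ) = Fintype.card ↥(B * A) := by
      rw [← Nat.card_coe_set_eq, Nat.card_eq_fintype_card]
    have hpos : (0 : ℝ) < (B * A).ncard := by
      rw [hcard]; exact_mod_cast Fintype.card_pos
    rw [le_div_iff₀ hpos] at hεN
    rw [Set.ncard_eq_toFinset_card E hEfin]
    apply hp_final d ε _ hε0 hε1 (by positivity)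
    intro s
    apply hp_main s d (fun (a : G) (z : ↥(B * A)) => (z : G) ∈ a • A) hEfin.toFinset ε hε0.le
    · intro a ha b hb hab
      rw [Set.Finite.mem_toFinset] at ha hb
      rw [← hcard]
      refine hεN.trans ((hEsep a ha b hb hab).le.trans ?_)
      have hsub : ∀ c ∈ E, c • A ⊆ B * A := fun c hc => Set.smul_set_subset_mul (hEB hc)
      have : (a • A) ∆ (b • A) = ((↑) : ↥(B * A) → G) ''
          (↑(Finset.univ.filter fun z : ↥(B * A) => ¬ ((z : G) ∈ a • A ↔ (z : G) ∈ b • A)) :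
            Set ↥(B * A)) := by
        ext g
        simp only [Set.mem_symmDiff, Set.mem_image, Finset.coe_filter, Finset.mem_univ, true_and,
          Set.mem_setOf_eq]
        constructor
        · intro h
          have hg : g ∈ B * A := by
            rcases h with h | h
            · exact hsub a ha h.1
            · exact hsub b hb h.1
          exact ⟨⟨g, hg⟩, by tauto, rfl⟩
        · rintro ⟨z, hz, rfl⟩; tauto
      rw [this, Set.ncard_image_of_injective _ Subtype.val_injective, Set.ncard_coe_finset]
    · intro S hS
      have hsh : Shatters (leftFam A B) (↑(S.map (Function.Embedding.subtype _)) : Set G) := by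
        intro T hT
        obtain ⟨a, ha, h⟩ := hS (S.filter fun z => (z : G) ∈ T) (Finset.filter_subset _ _)
        refine ⟨a • A, ⟨a, hEB (hEfin.mem_toFinset.1 ha), rfl⟩, ?_⟩
        ext g
        constructor
        · rintro ⟨hg, hga⟩
          obtain ⟨z, hz, rfl⟩ := Finset.mem_map.1 (Finset.mem_coe.1 hg)
          exact (Finset.mem_filter.1 ((h z hz).1 hga)).2
        · intro hg
          refine ⟨hT hg, ?_⟩
          obtain ⟨z, hz, rfl⟩ := Finset.mem_map.1 (Finset.mem_coe.1 (hT hg))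
          exact (h z hz).2 (Finset.mem_filter.2 ⟨hz, hg⟩)
      have hle : ((S.map (Function.Embedding.subtype _)).card : ℕ∞) ≤ vcDim (leftFam A B) :=
        le_iSup₂_of_le (f := fun (S : Finset G) (_ : Shatters (leftFam A B) ↑S) => (S.card : ℕ∞))
          _ hsh le_rfl
      rw [hd, Finset.card_map] at hle
      exact_mod_cast hle
  · intro b hb
    obtain ⟨e, he, hle⟩ : ∃ e ∈ E, (((e • A) ∆ (b • A)).ncard : ℝ) ≤ N := by
      by_contra hcon
      push Not at hcon
      have hgood : Good (insert b E) := by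
        refine ⟨Set.insert_subset hb hEB, ?_⟩
        rintro a (rfl | ha) c (rfl | hc) hac
        · exact absurd rfl hac
        · rw [symmDiff_comm]; exact hcon c hc
        · exact hcon a ha
        · exact hEsep a ha c hc hac
      have hbE : b ∈ E := hEmax.le_of_ge hgood (Set.subset_insert _ _) (Set.mem_insert _ _)
      have := hcon b hbE
      simp at this
      linarith
    refine Set.mem_mul.2 ⟨e, he, e⁻¹ * b, ⟨?_, ?_⟩, by simp⟩
    · change ((((e⁻¹ * b) • A) ∆ A).ncard : ℝ) ≤ N
      rw [hp_stab]; exact hle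
    · exact Set.mul_mem_mul (Set.inv_mem_inv.2 (hEB he)) hb
end

section
/- Let G be a group and A ⊆ G a nonempty finite set. The following are equivalent: (i) VC^ℓ_{A⁻¹}(A) = 0; (ii) VC^r_{A⁻¹}(A) = 0; (iii) |AA⁻¹| = |A|; (iv) |A⁻¹A| = |A|; (v) A is a coset of a subgroup of G, i.e., there is a subgroup H ≤ G and a ∈ G with A = aH. -/
open scoped Pointwise symmDiff

lemma vcDim_eq_zero_iff' {α : Type*} (F : Set (Set α)) :
    vcDim F = 0 ↔ ∀ f ∈ F, ∀ f' ∈ F, ∀ g ∈ f, g ∈ f' := by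
  unfold vcDim
  simp only [ENat.iSup_eq_zero, Nat.cast_eq_zero, Finset.card_eq_zero]
  constructor
  · intro h f hf f' hf' g hg
    by_contra hg'
    have := h {g} (by
      intro T hT
      rw [Finset.coe_singleton] at hT ⊢
      rcases Set.subset_singleton_iff_eq.1 hT with rfl | rfl
      · exact ⟨f', hf', by simpa using hg'⟩
      · exact ⟨f, hf, by simpa using hg⟩)
    simp at this
  · intro h S hS
    by_contra hne
    obtain ⟨g, hg⟩ := Finset.nonempty_iff_ne_empty.2 hne
    obtain ⟨f, hf, hfS⟩ := hS S subset_rfl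
    obtain ⟨f', hf', hfS'⟩ := hS ∅ (Set.empty_subset _)
    have h1 : g ∈ (S : Set α) ∩ f := by rw [hfS]; exact hg
    have h2 : g ∈ (S : Set α) ∩ f' := ⟨hg, h f hf f' hf' g h1.2⟩
    rw [hfS'] at h2
    exact h2

/-- Closure under the ternary heap operation. -/
def HeapClosed {G : Type*} [Group G] (A : Set G) : Prop :=
  ∀ x ∈ A, ∀ y ∈ A, ∀ z ∈ A, x * y⁻¹ * z ∈ A

lemma left_iff_heap {G : Type*} [Group G] (A : Set G) :
    vcDim (leftFam A A⁻¹) = 0 ↔ HeapClosed A := by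
  rw [vcDim_eq_zero_iff']
  constructor
  · intro h x hx y hy z hz
    have := h (y⁻¹ • A) ⟨y⁻¹, by simpa using hy, rfl⟩ (x⁻¹ • A) ⟨x⁻¹, by simpa using hx, rfl⟩
      (y⁻¹ * z) ⟨z, hz, rfl⟩
    rw [Set.mem_smul_set_iff_inv_smul_mem] at this
    simpa [mul_assoc] using this
  · rintro h _ ⟨a, ha, rfl⟩ _ ⟨b, hb, rfl⟩ _ ⟨c, hc, rfl⟩
    have := h _ hb _ ha _ hc
    simp only [Set.mem_smul_set_iff_inv_smul_mem]
    simpa [mul_assoc] using this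

lemma right_iff_heap {G : Type*} [Group G] (A : Set G) :
    vcDim (rightFam A A⁻¹) = 0 ↔ HeapClosed A := by
  rw [vcDim_eq_zero_iff']
  constructor
  · intro h x hx y hy z hz
    obtain ⟨w, hw, v, hv, e⟩ := h (A * {y⁻¹}) ⟨y⁻¹, by simpa using hy, rfl⟩
      (A * {z⁻¹}) ⟨z⁻¹, by simpa using hz, rfl⟩ (x * y⁻¹) ⟨x, hx, _, rfl, rfl⟩
    obtain rfl : v = z⁻¹ := hv
    have e' : w * z⁻¹ = x * y⁻¹ := e
    rw [← e']
    simpa using hw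
  · rintro h _ ⟨a, ha, rfl⟩ _ ⟨b, hb, rfl⟩ _ ⟨c, hc, v, hv, rfl⟩
    obtain rfl : v = a := hv
    have := h _ hc _ ha _ hb
    exact ⟨_, this, b, rfl, by simp⟩

lemma mul_inv_iff_heap {G : Type*} [Group G] (A : Set G) (hA : A.Finite) (hne : A.Nonempty) :
    (A * A⁻¹).ncard = A.ncard ↔ HeapClosed A := by
  have hfin : (A * A⁻¹).Finite := hA.mul hA.inv
  have sub : ∀ b ∈ A, (fun x => x * b⁻¹) '' A ⊆ A * A⁻¹ := by
    rintro b hb _ ⟨x, hx, rfl⟩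
    exact ⟨x, hx, b⁻¹, by simpa using hb, rfl⟩
  have card : ∀ b : G, ((fun x => x * b⁻¹) '' A).ncard = A.ncard := fun b =>
    Set.ncard_image_of_injective _ (mul_left_injective b⁻¹)
  constructor
  · intro h x hx y hy z hz
    have e := Set.eq_of_subset_of_ncard_le (sub z hz) (by rw [h, card]) hfin
    have hm : x * y⁻¹ ∈ A * A⁻¹ := ⟨x, hx, y⁻¹, by simpa using hy, rfl⟩
    rw [← e] at hm
    obtain ⟨w, hw, e'⟩ := hm
    have e'' : w * z⁻¹ = x * y⁻¹ := e'
    rw [← e'']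
    simpa using hw
  · intro h
    obtain ⟨b, hb⟩ := hne
    rw [← card b]
    congr 1
    refine Set.Subset.antisymm ?_ (sub b hb)
    rintro _ ⟨x, hx, y, hy, rfl⟩
    exact ⟨_, h _ hx _ hy _ hb, by simp⟩

lemma heap_inv {G : Type*} [Group G] (A : Set G) : HeapClosed A⁻¹ ↔ HeapClosed A := by
  have key : ∀ B : Set G, HeapClosed B → HeapClosed B⁻¹ := by
    intro B h x hx y hy z hz
    have := h _ hz _ hy _ hx
    rw [Set.mem_inv]
    simpa [mul_assoc] using this
  exact ⟨fun h => by simpa using key _ h, key _⟩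

lemma coset_iff_heap {G : Type*} [Group G] (A : Set G) (hne : A.Nonempty) :
    (∃ (H : Subgroup G) (a : G), A = a • (H : Set G)) ↔ HeapClosed A := by
  constructor
  · rintro ⟨H, a, rfl⟩ _ ⟨x, hx, rfl⟩ _ ⟨y, hy, rfl⟩ _ ⟨z, hz, rfl⟩
    exact ⟨x * y⁻¹ * z, H.mul_mem (H.mul_mem hx (H.inv_mem hy)) hz, by
      simp [mul_assoc]⟩
  · intro h
    obtain ⟨a, ha⟩ := hne
    refine ⟨{ carrier := {g | a * g ∈ A}
              one_mem' := by simpa using ha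
              mul_mem' := ?_
              inv_mem' := ?_ }, a, ?_⟩
    · intro x y hx hy
      have := h _ hx _ ha _ hy
      simpa [mul_assoc] using this
    · intro x hx
      have := h _ ha _ hx _ ha
      simpa [mul_assoc] using this
    · ext g
      simp [Set.mem_smul_set_iff_inv_smul_mem]

/-- equivalent characterizations of `VC^•_{A⁻¹}(A) = 0`
(Proposition 2.16(b) of the paper). -/
theorem vc_inv_eq_zero_tfae {G : Type*} [Group G] (A : Set G)
    (hA : A.Finite) (hAne : A.Nonempty) :
    List.TFAE
      [vcDim (leftFam A A⁻¹) = 0,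
       vcDim (rightFam A A⁻¹) = 0,
       (A * A⁻¹).ncard = A.ncard,
       (A⁻¹ * A).ncard = A.ncard,
       ∃ (H : Subgroup G) (a : G), A = a • (H : Set G)] := by
  have h4 : (A⁻¹ * A).ncard = A.ncard ↔ HeapClosed A := by
    have hi : A⁻¹.ncard = A.ncard := by
      rw [← Set.image_inv_eq_inv]
      exact Set.ncard_image_of_injective _ inv_injective
    have := mul_inv_iff_heap A⁻¹ hA.inv hAne.inv
    rwa [inv_inv, heap_inv, hi] at this
  rw [left_iff_heap, right_iff_heap, mul_inv_iff_heap A hA hAne, h4, coset_iff_heap A hAne]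
  simp only [List.TFAE, List.mem_cons, List.not_mem_nil, or_false, or_self]
  rintro x rfl y rfl
  rfl
end

section
/- For every integer d ≥ 1 and every ε ∈ (0,1) there is a constant C = C(d,ε) such that the following holds. Let G be a finite group and A ⊆ G a d-NIP set. Then there is a normal subgroup H ≤ G of index at most C and a (δ,m)-Bohr neighborhood B in H with 1/δ ≤ C and m ≤ C satisfying: (i) there is a set F ⊆ G with |F| ≤ C such that |A △ FB| < ε|G|; and (ii) there is a set Z ⊆ G with |Z| ≤ ε|G| such that for all g ∈ G \ Z, either |gB ∩ A| < ε|B| or |gB \ A| < ε|B|. -/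
open scoped Pointwise symmDiff

/-- A `(δ,m)`-Bohr neighborhood in a group `H` (viewed as a subgroup of `G`):
the set of `h ∈ H` with `|τ(h)_i - 1| < δ` for all `i`, for some homomorphism
`τ : H → (S¹)^m` into the `m`-dimensional torus. -/
def IsBohrNbhdIn {G : Type*} [Group G] (H : Subgroup G) (δ : ℝ) (m : ℕ) (B : Set G) : Prop :=
  ∃ τ : H →* (Fin m → Circle),
    B = {g : G | ∃ h : H, (h : G) = g ∧ ∀ i : Fin m, ‖(τ h i : ℂ) - 1‖ < δ}


section PartA
open Finset

/-- Numerical choice for the packing bound. -/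
lemma nipaux_exists_params (D : ℕ) (η : ℝ) (h0 : 0 < η) (h1 : η < 1) :
    ∃ k N : ℕ, D * (k + 1) ^ D < N ∧ (N : ℝ) ^ 2 * (1 - η) ^ k < 1 := by
  have ht := tendsto_pow_const_mul_const_pow_of_abs_lt_one (2 * D) (r := 1 - η)
    (by rw [abs_lt]; constructor <;> linarith)
  have ht2 := (ht.const_mul (((D : ℝ) + 1) ^ 2 * (1 - η)⁻¹)).comp (Filter.tendsto_add_atTop_nat 1)
  rw [mul_zero] at ht2
  obtain ⟨k, hk⟩ := (ht2.eventually (gt_mem_nhds (zero_lt_one' ℝ))).exists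
  refine ⟨k, D * (k + 1) ^ D + 1, by omega, ?_⟩
  have h2 : ((D * (k + 1) ^ D + 1 : ℕ) : ℝ) ≤ (D + 1) * ((k : ℝ) + 1) ^ D := by
    have : (1 : ℝ) ≤ ((k : ℝ) + 1) ^ D := one_le_pow₀ (by linarith [(Nat.cast_nonneg k : (0:ℝ) ≤ k)])
    push_cast
    linarith
  have h3 : (0 : ℝ) < 1 - η := by linarith
  calc ((D * (k + 1) ^ D + 1 : ℕ) : ℝ) ^ 2 * (1 - η) ^ k
      ≤ ((D + 1) * ((k : ℝ) + 1) ^ D) ^ 2 * (1 - η) ^ k := by gcongr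
    _ = ((D : ℝ) + 1) ^ 2 * (1 - η)⁻¹ * (((k + 1 : ℕ) : ℝ) ^ (2 * D) * (1 - η) ^ (k + 1)) := by
        push_cast
        field_simp
        ring
    _ < 1 := hk

/-- Number of tuples avoiding a set. -/
lemma nipaux_card_avoid {X : Type*} [Fintype X] [DecidableEq X] (k : ℕ) (s : Finset X) :
    (univ.filter (fun f : Fin k → X => ∀ i, f i ∈ s)).card = s.card ^ k := by
  have : univ.filter (fun f : Fin k → X => ∀ i, f i ∈ s) = Fintype.piFinset (fun _ => s) := by
    ext f; simp
  rw [this]; simp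

/-- Packing lemma for bounded VC-dimension. -/
lemma nipaux_packing (D : ℕ) (η : ℝ) (h0 : 0 < η) (h1 : η < 1) :
    ∃ N : ℕ, 0 < N ∧ ∀ (X Y : Type*) [Fintype X] [DecidableEq X] [DecidableEq Y] [Nonempty X]
      (r : X → Y → Prop) [∀ x y, Decidable (r x y)],
      (∀ x : Fin D → X, Function.Injective x →
        ∃ T : Finset (Fin D), ∀ y, ∃ i, ¬ (r (x i) y ↔ i ∈ T)) →
      ∀ Y0 : Finset Y, (∀ y ∈ Y0, ∀ y' ∈ Y0, y ≠ y' →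
        η * Fintype.card X ≤ (univ.filter (fun x => ¬ (r x y ↔ r x y'))).card) → Y0.card < N := by
  obtain ⟨k, N, hN, hk⟩ := nipaux_exists_params D η h0 h1
  refine ⟨N, by omega, ?_⟩
  intro X Y _ _ _ _ r _ hns Y0' hsep'
  by_contra hlt
  push Not at hlt
  obtain ⟨Y0, hY0, hcard⟩ := Finset.exists_subset_card_eq hlt
  have hsep : ∀ y ∈ Y0, ∀ y' ∈ Y0, y ≠ y' →
        η * Fintype.card X ≤ (univ.filter (fun x => ¬ (r x y ↔ r x y'))).card :=
    fun y hy y' hy' h => hsep' y (hY0 hy) y' (hY0 hy') h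
  have hXpos : (0 : ℝ) < Fintype.card X := by exact_mod_cast Fintype.card_pos
  -- distinguishing tuple
  have hex : ∃ f : Fin k → X, ∀ y ∈ Y0, ∀ y' ∈ Y0, y ≠ y' → ∃ i, ¬ (r (f i) y ↔ r (f i) y') := by
    by_contra hno
    push Not at hno
    have hcov : (univ : Finset (Fin k → X)) ⊆ (Y0 ×ˢ Y0).biUnion (fun p =>
        if p.1 = p.2 then ∅ else
        univ.filter (fun f : Fin k → X => ∀ i, f i ∈ univ.filter (fun x => (r x p.1 ↔ r x p.2)))) := by
      intro f _
      obtain ⟨y, hy, y', hy', hne, h⟩ := hno f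
      rw [mem_biUnion]
      refine ⟨(y, y'), by simp [hy, hy'], ?_⟩
      simp only [hne, if_false]
      simpa using h
    have hc := (card_le_card hcov).trans card_biUnion_le
    have hc' : ((Fintype.card X : ℝ)) ^ k ≤ ∑ p ∈ Y0 ×ˢ Y0, ((1 - η) * Fintype.card X) ^ k := by
      have h5 : ((Fintype.card X : ℝ)) ^ k = ((univ : Finset (Fin k → X)).card : ℝ) := by simp
      rw [h5]
      refine (Nat.cast_le.2 hc).trans ?_
      push_cast
      refine sum_le_sum ?_
      rintro ⟨y, y'⟩ hp
      simp only [mem_product] at hp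
      have hnn : (0 : ℝ) ≤ (1 - η) * Fintype.card X := mul_nonneg (by linarith) hXpos.le
      by_cases hyy : y = y'
      · simp only [hyy, if_true, card_empty, Nat.cast_zero]; positivity
      simp only [hyy, if_false]
      rw [nipaux_card_avoid]
      push_cast
      refine pow_le_pow_left₀ (by positivity) ?_ k
      have h6 := hsep y hp.1 y' hp.2 hyy
      have h7 := card_filter_add_card_filter_not (s := (univ : Finset X)) (fun x => (r x y ↔ r x y'))
      rw [card_univ] at h7
      have h8 : ((univ.filter (fun x => (r x y ↔ r x y'))).card : ℝ) +
         (univ.filter (fun x => ¬ (r x y ↔ r x y'))).card = Fintype.card X := by exact_mod_cast h7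
      linarith
    rw [sum_const, card_product, hcard, mul_pow, nsmul_eq_mul] at hc'
    push_cast at hc'
    have : (0:ℝ) < (Fintype.card X : ℝ) ^ k := by positivity
    nlinarith
  obtain ⟨f, hf⟩ := hex
  let tr : Y → Finset (Fin k) := fun y => univ.filter (fun i => r (f i) y)
  have hinj : Set.InjOn tr Y0 := by
    intro y hy y' hy' h
    by_contra hne
    obtain ⟨i, hi⟩ := hf y hy y' hy' hne
    have := Finset.ext_iff.1 h i
    simp only [tr, mem_filter, mem_univ, true_and] at this
    exact hi this
  set F := Y0.image tr with hF
  have hFcard : F.card = N := by rw [hF, card_image_of_injOn hinj, hcard]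
  have hvc : ∀ s, F.Shatters s → s.card < D := by
    intro s hs
    by_contra hge
    push Not at hge
    obtain ⟨s', hs's, hs'c⟩ := Finset.exists_subset_card_eq hge
    have hs' := hs.mono_right hs's
    let e : Fin D ≃ s' := (Finset.equivFinOfCardEq hs'c).symm
    have key : ∀ T : Finset (Fin D), ∃ y, ∀ i, (r (f (e i)) y ↔ i ∈ T) := by
      intro T
      obtain ⟨u, hu, hut⟩ := hs' (t := T.image (fun i => (e i : Fin k))) (by
        intro j hj
        obtain ⟨i, _, rfl⟩ := mem_image.1 hj
        exact (e i).2)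
      obtain ⟨y, hy, rfl⟩ := mem_image.1 hu
      refine ⟨y, fun i => ?_⟩
      have := Finset.ext_iff.1 hut (e i)
      simp only [tr, mem_inter, (e i).2, true_and, mem_filter, mem_univ, mem_image] at this
      rw [this]
      constructor
      · rintro ⟨a, ha, h⟩
        rwa [← e.injective (Subtype.ext h)]
      · intro h; exact ⟨i, h, rfl⟩
    have hxinj : Function.Injective (fun i => f (e i)) := by
      intro i j hij
      obtain ⟨y, hy⟩ := key {i}
      have h1 := (hy i).2 (by simp)
      have h2 := (hy j).1 (by simp only at hij; rwa [← hij])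
      exact (mem_singleton.1 h2).symm
    obtain ⟨T, hT⟩ := hns _ hxinj
    obtain ⟨y, hy⟩ := key T
    obtain ⟨i, hi⟩ := hT y
    exact hi (hy i)
  have h9 : F.card ≤ ∑ i ∈ range D, k.choose i := by
    refine (card_le_card_shatterer F).trans ?_
    have hsub : F.shatterer ⊆ (range D).biUnion (fun i => (univ : Finset (Fin k)).powersetCard i) := by
      intro s hs
      rw [mem_biUnion]
      exact ⟨s.card, by simpa using hvc s (mem_shatterer.1 hs), by simp [mem_powersetCard]⟩
    refine (card_le_card hsub).trans (card_biUnion_le.trans ?_)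
    simp
  have h10 : ∑ i ∈ range D, k.choose i ≤ D * (k + 1) ^ D := by
    calc ∑ i ∈ range D, k.choose i ≤ ∑ i ∈ range D, (k + 1) ^ D := by
          refine sum_le_sum fun i hi => ?_
          calc k.choose i ≤ k ^ i := Nat.choose_le_pow k i
            _ ≤ (k + 1) ^ i := Nat.pow_le_pow_left (by omega) i
            _ ≤ (k + 1) ^ D := Nat.pow_le_pow_right (by omega) (mem_range.1 hi).le
      _ = _ := by simp
  omega

end PartA

section PartA2
open Finset
variable {G : Type*} [Group G] [Fintype G]

open Classical in
/-- The (unnormalised) left-invariant pseudometric coming from right translates. -/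
noncomputable def nipDist (A : Set G) (g h : G) : ℕ :=
  (univ.filter (fun x : G => ¬ (x * g ∈ A ↔ x * h ∈ A))).card

lemma nipDist_comm (A : Set G) (g h : G) : nipDist A g h = nipDist A h g := by
  unfold nipDist
  congr 1
  ext x
  simp only [mem_filter, mem_univ, true_and]
  tauto

lemma nipDist_left (A : Set G) (a g h : G) : nipDist A (a * g) (a * h) = nipDist A g h := by
  unfold nipDist
  refine card_bij (fun x _ => x * a) ?_ ?_ ?_
  · intro x hx
    simpa [mul_assoc] using hx
  · intro x _ y _ h
    exact mul_right_cancel h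
  · intro y hy
    refine ⟨y * a⁻¹, ?_, by simp⟩
    simpa [mul_assoc] using hy

lemma nipDist_self (A : Set G) (g : G) : nipDist A g g = 0 := by
  simp [nipDist]

lemma nipDist_triangle (A : Set G) (g h k : G) :
    nipDist A g k ≤ nipDist A g h + nipDist A h k := by
  classical
  unfold nipDist
  refine (card_le_card ?_).trans (card_union_le _ _)
  intro x
  simp only [mem_filter, mem_univ, true_and, mem_union]
  tauto

lemma nipaux_cover (D : ℕ) (η : ℝ) (h0 : 0 < η) (h1 : η < 1) :
    ∃ N : ℕ, 0 < N ∧ ∀ (G : Type*) [Group G] [Fintype G] [DecidableEq G] (A : Set G),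
      (∀ x : Fin D → G, Function.Injective x →
        ∃ T : Finset (Fin D), ∀ y, ∃ i, ¬ (x i * y ∈ A ↔ i ∈ T)) →
      Fintype.card G ≤ N * 
        (univ.filter (fun g : G => (nipDist A 1 g : ℝ) < η * Fintype.card G)).card := by
  classical
  obtain ⟨N, hN, h⟩ := nipaux_packing D η h0 h1
  refine ⟨N, hN, ?_⟩
  intro G _ _ _ A hA
  let P : Finset G → Prop := fun Y0 => ∀ y ∈ Y0, ∀ y' ∈ Y0, y ≠ y' →
        η * Fintype.card G ≤ nipDist A y y'
  have hlt : ∀ Y0, P Y0 → Y0.card < N := fun Y0 hY => h G G (fun x y => x * y ∈ A) hA Y0 hY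
  obtain ⟨Y0, hY0, hmax⟩ := Finset.exists_max_image (univ.filter P) card ⟨∅, by simp [P]⟩
  simp only [mem_filter, mem_univ, true_and] at hY0 hmax
  set S := univ.filter (fun g : G => (nipDist A 1 g : ℝ) < η * Fintype.card G) with hS
  have hcov : (univ : Finset G) ⊆ Y0.biUnion (fun y => S.image (fun s => y * s)) := by
    intro g _
    rw [mem_biUnion]
    have hpos : (0 : ℝ) < η * Fintype.card G := by
      have : 0 < Fintype.card G := Fintype.card_pos
      positivity
    have hclose : ∃ y ∈ Y0, (nipDist A y g : ℝ) < η * Fintype.card G := by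
      by_contra hno
      push Not at hno
      have hg : g ∉ Y0 := fun hg => by
        have := hno g hg
        rw [nipDist_self] at this
        simp only [Nat.cast_zero] at this
        linarith
      have := hmax (insert g Y0) (by
        intro y hy y' hy' hne
        rw [mem_insert] at hy hy'
        rcases hy with rfl | hy <;> rcases hy' with rfl | hy'
        · exact absurd rfl hne
        · rw [nipDist_comm]; exact hno _ hy'
        · exact hno _ hy
        · exact hY0 _ hy _ hy' hne)
      rw [card_insert_of_notMem hg] at this
      omega
    obtain ⟨y, hy, hyg⟩ := hclose
    refine ⟨y, hy, mem_image.2 ⟨y⁻¹ * g, ?_, by simp⟩⟩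
    rw [hS, mem_filter]
    refine ⟨mem_univ _, ?_⟩
    rw [← nipDist_left A y]
    simpa using hyg
  calc Fintype.card G = (univ : Finset G).card := card_univ.symm
    _ ≤ _ := card_le_card hcov
    _ ≤ _ := card_biUnion_le
    _ ≤ ∑ y ∈ Y0, S.card := sum_le_sum fun y _ => card_image_le
    _ = Y0.card * S.card := by simp
    _ ≤ N * S.card := Nat.mul_le_mul_right _ (hlt Y0 hY0).le

end PartA2

section PartA3
open Finset

lemma nipaux_dual {G : Type*} [Group G] (A : Set G) (d : ℕ)
    (hA : vcDim (leftFam A (Set.univ : Set G)) < (d : ℕ∞)) :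
    ∀ x : Fin (2 ^ d) → G, Function.Injective x →
        ∃ T : Finset (Fin (2 ^ d)), ∀ y, ∃ i, ¬ (x i * y ∈ A ↔ i ∈ T) := by
  classical
  intro x hx
  by_contra hno
  push Not at hno
  choose y hy using hno
  have e : Fin (2 ^ d) ≃ Finset (Fin d) := Fintype.equivOfCardEq (by simp)
  let z : Fin d → G := fun j => y (univ.filter (fun i => j ∈ e i))
  have hz : ∀ i j, x i * z j ∈ A ↔ j ∈ e i := by
    intro i j
    rw [hy]
    simp
  have hzinj : Function.Injective z := by
    intro j j' h
    have h1 := hz (e.symm {j}) j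
    have h2 := hz (e.symm {j}) j'
    rw [h, h2] at h1
    simp at h1
    exact h1.symm
  have hsh : Shatters (leftFam A (Set.univ : Set G)) (↑(univ.image z) : Set G) := by
    intro T hT
    refine ⟨(x (e.symm (univ.filter (fun j => z j ∈ T))))⁻¹ • A, ⟨_, Set.mem_univ _, rfl⟩, ?_⟩
    ext g
    simp only [coe_image, coe_univ, Set.image_univ, Set.mem_inter_iff, Set.mem_range,
      Set.mem_inv_smul_set_iff, smul_eq_mul]
    constructor
    · rintro ⟨⟨j, rfl⟩, h⟩
      rw [hz] at h
      simpa using h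
    · intro h
      obtain ⟨j, rfl⟩ : ∃ j, z j = g := by simpa using hT h
      refine ⟨⟨j, rfl⟩, ?_⟩
      rw [hz]
      simpa using h
  have hle : ((univ.image z).card : ℕ∞) ≤ vcDim (leftFam A (Set.univ : Set G)) := by
    unfold _root_.vcDim
    exact le_iSup₂ (f := fun (S : Finset G) (_ : Shatters (leftFam A (Set.univ : Set G)) ↑S) =>
      (S.card : ℕ∞)) (univ.image z) hsh
  rw [card_image_of_injective _ hzinj] at hle
  simp at hle
  exact absurd hA (not_lt.2 hle)

end PartA3

section PartB
open Finset
set_option linter.unusedSectionVars false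

/-- Quantisation of bounded complex tuples. -/
lemma nipaux_color (n : ℕ) (r : ℝ) (hr : 0 < r) :
    ∃ N : ℕ, ∀ (ι : Type) [Fintype ι], Fintype.card ι ≤ n → ∀ (X : Type*) (f : X → ι → ℂ),
      (∀ x i, ‖f x i‖ ≤ 1) →
      ∃ c : X → Fin N, ∀ x y, c x = c y → ∀ i, ‖f x i - f y i‖ < r := by
  obtain ⟨t, hts, htf, ht⟩ := finite_cover_balls_of_compact
    (isCompact_closedBall (0 : Fin n → ℂ) 1) (half_pos hr)
  obtain ⟨t, rfl⟩ := htf.exists_finset_coe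
  refine ⟨t.card, ?_⟩
  intro ι _ hι X f hf
  obtain ⟨e⟩ : Nonempty (ι ↪ Fin n) := Function.Embedding.nonempty_of_card_le (by simpa using hι)
  let g : X → Fin n → ℂ := fun x => Function.extend e (f x) 0
  have hg : ∀ x, g x ∈ Metric.closedBall (0 : Fin n → ℂ) 1 := by
    intro x
    rw [mem_closedBall_zero_iff, pi_norm_le_iff_of_nonneg zero_le_one]
    intro j
    by_cases hj : ∃ i, e i = j
    · obtain ⟨i, rfl⟩ := hj
      simpa [g, e.injective.extend_apply] using hf x i
    · simp [g, Function.extend_apply' _ _ _ hj]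
  have hc : ∀ x, ∃ y : t, dist (g x) y < r / 2 := by
    intro x
    have := ht (hg x)
    simp only [Set.mem_iUnion, Metric.mem_ball] at this
    obtain ⟨y, hy, h⟩ := this
    exact ⟨⟨y, hy⟩, h⟩
  choose c hc using hc
  refine ⟨fun x => t.equivFin (c x), ?_⟩
  intro x y hxy i
  have hxy' : c x = c y := t.equivFin.injective hxy
  have h1 := hc x
  have h2 := hc y
  rw [hxy'] at h1
  have h3 : dist (g x) (g y) < r := by
    have := dist_triangle_right (g x) (g y) (c y : Fin n → ℂ)
    linarith
  have h4 := (dist_le_pi_dist (g x) (g y) (e i)).trans_lt h3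
  simpa [g, e.injective.extend_apply, dist_eq_norm] using h4

variable {V : Type*} [NormedAddCommGroup V] [InnerProductSpace ℂ V] [FiniteDimensional ℂ V]

lemma nipaux_inner_isom (T : V →L[ℂ] V) (h : ∀ v, ‖T v‖ = ‖v‖) (v w : V) :
    inner ℂ (T v) (T w) = inner ℂ v w := by
  let L : V →ₗᵢ[ℂ] V := ⟨T.toLinearMap, h⟩
  exact L.inner_map_map v w

/-- Commuting operators have a joint eigenvector in every nonzero invariant subspace. -/
lemma nipaux_joint_eigenvector {ι : Type*} (T : ι → V →L[ℂ] V)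
    (hcomm : ∀ i j v, T i (T j v) = T j (T i v)) (n : ℕ) :
    ∀ W : Submodule ℂ V, Module.finrank ℂ W = n → W ≠ ⊥ → (∀ i, ∀ v ∈ W, T i v ∈ W) →
      ∃ v ∈ W, v ≠ 0 ∧ ∀ i, ∃ c : ℂ, T i v = c • v := by
  induction n using Nat.strong_induction_on with
  | _ n ih =>
  intro W hn hW hinv
  by_cases hsc : ∀ i, ∃ c : ℂ, ∀ v ∈ W, T i v = c • v
  · obtain ⟨v, hv, hv0⟩ := W.exists_mem_ne_zero_of_ne_bot hW
    refine ⟨v, hv, hv0, fun i => ?_⟩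
    obtain ⟨c, hc⟩ := hsc i
    exact ⟨c, hc v hv⟩
  push Not at hsc
  obtain ⟨i, hi⟩ := hsc
  have : Nontrivial W := Submodule.nontrivial_iff_ne_bot.2 hW
  obtain ⟨c, hc⟩ := Module.End.exists_eigenvalue ((T i).toLinearMap.restrict (hinv i))
  obtain ⟨w, hw⟩ := hc.exists_hasEigenvector
  have hw1 : T i (w : V) = c • (w : V) := by
    have := congrArg Subtype.val hw.apply_eq_smul
    simpa using this
  have hw0 : (w : V) ≠ 0 := by
    have := hw.2
    simpa using this
  let E : Submodule ℂ V := W ⊓ LinearMap.ker ((T i).toLinearMap - c • LinearMap.id)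
  have hE : ∀ v, v ∈ E ↔ v ∈ W ∧ T i v = c • v := by
    intro v
    simp [E, sub_eq_zero]
  have hEW : E < W := by
    refine lt_of_le_of_ne inf_le_left ?_
    intro h
    obtain ⟨v, hv, hne⟩ := hi c
    rw [← h] at hv
    exact hne ((hE v).1 hv).2
  have hlt := Submodule.finrank_lt_finrank_of_lt hEW
  obtain ⟨v, hv, hv0, h⟩ := ih _ (hn ▸ hlt) E rfl
    (fun h => hw0 ((Submodule.mem_bot ℂ).1 (h ▸ (hE _).2 ⟨w.2, hw1⟩)))
    (by
      intro j v hv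
      rw [hE] at hv ⊢
      refine ⟨hinv j v hv.1, ?_⟩
      rw [hcomm, hv.2, map_smul])
  exact ⟨v, ((hE v).1 hv).1, hv0, h⟩

/-- Commuting isometries are simultaneously diagonalisable. -/
lemma nipaux_diag {ι : Type*} (T : ι → V →L[ℂ] V)
    (hcomm : ∀ i j v, T i (T j v) = T j (T i v)) (hiso : ∀ i v, ‖T i v‖ = ‖v‖) :
    ∃ k ≤ Module.finrank ℂ V, ∃ e : OrthonormalBasis (Fin k) ℂ V,
      ∀ j i, ∃ c : ℂ, T i (e j) = c • e j := by
  classical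
  let P : ℕ → Prop := fun k => ∃ e : Fin k → V, Orthonormal ℂ e ∧ ∀ j i, ∃ c : ℂ, T i (e j) = c • e j
  have hPle : ∀ k, P k → k ≤ Module.finrank ℂ V := by
    rintro k ⟨e, he, _⟩
    simpa using he.linearIndependent.fintype_card_le_finrank
  have hP0 : P 0 := ⟨Fin.elim0, ⟨fun i => i.elim0, fun i => i.elim0⟩, fun i => i.elim0⟩
  set k := Nat.findGreatest P (Module.finrank ℂ V) with hk
  have hPk : P k := Nat.findGreatest_spec (Nat.zero_le _) hP0
  have hmax : ¬ P (k + 1) := by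
    intro h
    have := Nat.le_findGreatest (hPle _ h) h
    omega
  obtain ⟨e, he, hT⟩ := hPk
  refine ⟨k, hPle k ⟨e, he, hT⟩, ?_⟩
  set W : Submodule ℂ V := (Submodule.span ℂ (Set.range e))ᗮ with hWdef
  have hWmem : ∀ v, v ∈ W ↔ ∀ j, inner ℂ (e j) v = 0 := by
    intro v
    rw [hWdef, Submodule.mem_orthogonal]
    constructor
    · intro h j
      exact h _ (Submodule.subset_span ⟨j, rfl⟩)
    · intro h u hu
      induction hu using Submodule.span_induction with
      | mem x hx => obtain ⟨j, rfl⟩ := hx; exact h j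
      | zero => simp
      | add x y _ _ hx hy => rw [inner_add_left, hx, hy, add_zero]
      | smul a x _ hx => rw [inner_smul_left, hx, mul_zero]
  have hWbot : W = ⊥ := by
    by_contra hW
    obtain ⟨v, hv, hv0, hvT⟩ := nipaux_joint_eigenvector T hcomm _ W rfl hW (by
      intro i v hv
      rw [hWmem] at hv ⊢
      intro j
      obtain ⟨c, hc⟩ := hT j i
      have h1 : inner ℂ (T i (e j)) (T i v) = 0 := by
        rw [nipaux_inner_isom _ (hiso i), hv j]
      rw [hc, inner_smul_left] at h1
      have hc0 : c ≠ 0 := by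
        rintro rfl
        have := hiso i (e j)
        rw [hc, zero_smul, norm_zero, he.1 j] at this
        norm_num at this
      rcases mul_eq_zero.1 h1 with h | h
      · exact absurd ((map_eq_zero _).1 h) hc0
      · exact h)
    apply hmax
    have hnv : ((‖v‖ : ℝ) : ℂ) ≠ 0 := by simpa using hv0
    let u : V := ((‖v‖ : ℂ))⁻¹ • v
    have hu1 : ‖u‖ = 1 := by
      simp only [u, norm_smul, norm_inv, Complex.norm_real, norm_norm]
      exact inv_mul_cancel₀ (by simpa using hv0)
    have hue : ∀ j, inner ℂ (e j) u = 0 := by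
      intro j
      simp only [u, inner_smul_right, (hWmem v).1 hv j, mul_zero]
    refine ⟨Fin.cons u e, ⟨?_, ?_⟩, ?_⟩
    · intro i
      refine Fin.cases ?_ (fun i => ?_) i
      · simpa using hu1
      · simpa using he.1 i
    · intro i j
      refine Fin.cases ?_ (fun i => ?_) i <;> refine Fin.cases ?_ (fun j => ?_) j
      · intro h; exact absurd rfl h
      · intro _
        simp only [Fin.cons_zero, Fin.cons_succ]
        rw [← inner_conj_symm, hue j, map_zero]
      · intro _
        simpa using hue i
      · intro h
        simp only [Fin.cons_succ]
        exact he.2 (fun h' => h (by rw [h']))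
    · intro j i
      refine Fin.cases ?_ (fun j => ?_) j
      · obtain ⟨c, hc⟩ := hvT i
        refine ⟨c, ?_⟩
        simp only [Fin.cons_zero, u, map_smul, hc]
        rw [smul_comm]
      · simpa using hT j i
  have hspan : ⊤ ≤ Submodule.span ℂ (Set.range e) := by
    rw [top_le_iff, ← Submodule.orthogonal_eq_bot_iff]
    exact hWbot
  refine ⟨OrthonormalBasis.mk he hspan, ?_⟩
  simpa using hT

/-- Norm bound for diagonal operators. -/
lemma nipaux_diag_bound {k : ℕ} (e : OrthonormalBasis (Fin k) ℂ V) (T : V →L[ℂ] V) (χ : Fin k → ℂ)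
    (h : ∀ j, T (e j) = χ j • e j) (δ : ℝ) (hδ : 0 ≤ δ) (hχ : ∀ j, ‖χ j - 1‖ ≤ δ) (v : V) :
    ‖T v - v‖ ≤ δ * ‖v‖ := by
  have h1 : ∀ j, inner ℂ (e j) (T v - v) = (χ j - 1) * inner ℂ (e j) v := by
    intro j
    have : T v - v = ∑ i, ((χ i - 1) * inner ℂ (e i) v) • e i := by
      conv_lhs => rw [← e.sum_repr' v]
      simp only [map_sum, map_smul, h, ← sum_sub_distrib]
      refine sum_congr rfl fun i _ => ?_
      rw [smul_smul, ← sub_smul]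
      congr 1
      ring
    rw [this, e.orthonormal.inner_right_fintype]
  have h2 := e.sum_sq_norm_inner_right (T v - v)
  have h3 := e.sum_sq_norm_inner_right v
  have h4 : ‖T v - v‖ ^ 2 ≤ (δ * ‖v‖) ^ 2 := by
    rw [← h2, mul_pow, ← h3, mul_sum]
    refine sum_le_sum fun j _ => ?_
    rw [h1, norm_mul, mul_pow]
    gcongr
    exact hχ j
  exact le_of_sq_le_sq h4 (by positivity)

variable {G : Type*} [Group G]

/-- Frobenius: if `g` commutes with `h g h⁻¹` and `h` is near the identity then `g, h` commute. -/
lemma nipaux_frobenius (P : G →* (V →L[ℂ] V)) (hP : ∀ g v, ‖P g v‖ = ‖v‖) (g h : G)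
    (hh : ‖P h - 1‖ ≤ 1 / 4) (hc : P g * P (h * g * h⁻¹) = P (h * g * h⁻¹) * P g) :
    P g = P (h * g * h⁻¹) := by
  let T : Bool → V →L[ℂ] V := fun b => if b then P g else P (h * g * h⁻¹)
  obtain ⟨k, _, e, he⟩ := nipaux_diag T (by
    intro i j v
    have hc' : P g (P (h * g * h⁻¹) v) = P (h * g * h⁻¹) (P g v) := by
      have := congrArg (fun S : V →L[ℂ] V => S v) hc
      simpa using this
    rcases i <;> rcases j <;> simp only [T] <;> first | rfl | exact hc' | exact hc'.symm)
    (by intro i v; rcases i <;> simp [T, -map_mul, hP])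
  have key : ∀ j, P g (e j) = P (h * g * h⁻¹) (e j) := by
    intro j
    obtain ⟨a, ha⟩ := he j true
    obtain ⟨b, hb⟩ := he j false
    simp only [T, if_true] at ha
    simp only [T, Bool.false_eq_true, if_false] at hb
    by_cases hab : a = b
    · rw [ha, hb, hab]
    exfalso
    -- w = P h⁻¹ e_j is a b-eigenvector of P g
    set w := P h⁻¹ (e j) with hw
    have hw1 : P g w = b • w := by
      have h1 : P h⁻¹ (P (h * g * h⁻¹) (e j)) = P g w := by
        rw [hw, ← mul_apply_eq_comp, ← mul_apply_eq_comp, ← map_mul,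
          ← map_mul]
        congr 2
        group
      rw [← h1, hb, map_smul]
    have ha1 : ‖a‖ = 1 := by
      have := hP g (e j)
      rw [ha, norm_smul, e.orthonormal.1 j] at this
      simpa using this
    have horth : inner ℂ w (e j) = 0 := by
      have h1 := nipaux_inner_isom (P g) (hP g) w (e j)
      rw [hw1, ha, inner_smul_left, inner_smul_right] at h1
      have hb1 : ‖b‖ = 1 := by
        have := hP g w
        rw [hw1, norm_smul, hw, hP, e.orthonormal.1 j] at this
        simpa using this
      have hbb : b * (starRingEnd ℂ) b = 1 := by
        rw [Complex.mul_conj, Complex.normSq_eq_norm_sq, hb1]; simp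
      have h2 : (a - b) * inner ℂ w (e j) = 0 := by
        have : a * inner ℂ w (e j) = b * inner ℂ w (e j) := by
          calc a * inner ℂ w (e j) = (b * (starRingEnd ℂ) b) * (a * inner ℂ w (e j)) := by
                rw [hbb, one_mul]
            _ = b * ((starRingEnd ℂ) b * (a * inner ℂ w (e j))) := by ring
            _ = _ := by rw [h1]
        rw [sub_mul, this, sub_self]
      rcases mul_eq_zero.1 h2 with h | h
      · exact absurd (sub_eq_zero.1 h) hab
      · exact h
    have hwn : ‖w‖ = 1 := by rw [hw, hP, e.orthonormal.1 j]
    have hPw : P h w = e j := by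
      rw [hw, ← mul_apply_eq_comp, ← map_mul]
      simp
    have h3 : ‖e j - w‖ ≤ 1 / 4 := by
      have := (P h - 1).le_opNorm w
      simp only [sub_apply, hPw, one_apply_eq_self, hwn,
        mul_one] at this
      linarith
    have h4 : ‖w‖ ^ 2 ≤ ‖e j - w‖ * ‖w‖ := by
      have h5 : inner ℂ w (w - e j) = ((‖w‖ : ℂ)) ^ 2 := by
        rw [inner_sub_right, horth, sub_zero, inner_self_eq_norm_sq_to_K]; rfl
      have h6 := norm_inner_le_norm (𝕜 := ℂ) w (w - e j)
      rw [h5, norm_sub_rev] at h6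
      simp only [norm_pow, Complex.norm_real, norm_norm] at h6
      linarith
    rw [hwn] at h4
    linarith
  ext v
  rw [← e.sum_repr' v]
  simp only [map_sum, map_smul, key]

/-- Elements near the identity in a finite linear isometry group commute. -/
lemma nipaux_near_commute [Finite G] (P : G →* (V →L[ℂ] V)) (hP : ∀ g v, ‖P g v‖ = ‖v‖) (g h : G)
    (hg : ‖P g - 1‖ ≤ 1 / 4) (hh : ‖P h - 1‖ ≤ 1 / 4) : P g * P h = P h * P g := by
  classical
  have := Fintype.ofFinite G
  by_contra hne
  let s : Finset G := univ.filter (fun h => ‖P h - 1‖ ≤ 1 / 4 ∧ P g * P h ≠ P h * P g)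
  obtain ⟨h, hhs, hmin⟩ := Finset.exists_min_image s (fun h => ‖P h - 1‖) ⟨h, mem_filter.2 ⟨mem_univ _, hh, hne⟩⟩
  simp only [s, mem_filter, mem_univ, true_and] at hhs hmin
  obtain ⟨hh, hne⟩ := hhs
  have hle1 : ∀ x, ‖P x‖ ≤ 1 := fun x =>
    ContinuousLinearMap.opNorm_le_bound _ zero_le_one (fun v => by rw [hP, one_mul])
  set c := g * h * g⁻¹ * h⁻¹ with hc
  have hcb : ‖P c - 1‖ ≤ ‖P h - 1‖ / 2 := by
    have h1 : P c - 1 = ((P g - 1) * (P h - 1) - (P h - 1) * (P g - 1)) * P (g⁻¹ * h⁻¹) := by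
      have h2 : P c = P g * P h * P (g⁻¹ * h⁻¹) := by
        rw [← map_mul, ← map_mul, hc]; congr 1; group
      have h3 : (1 : V →L[ℂ] V) = P h * P g * P (g⁻¹ * h⁻¹) := by
        rw [← map_mul, ← map_mul, ← map_one P]; congr 1; group
      conv_lhs => rw [h2, h3]
      noncomm_ring
    rw [h1]
    have h4 := norm_mul_le ((P g - 1) * (P h - 1) - (P h - 1) * (P g - 1)) (P (g⁻¹ * h⁻¹))
    have h5 := norm_sub_le ((P g - 1) * (P h - 1)) ((P h - 1) * (P g - 1))
    have h6 := norm_mul_le (P g - 1) (P h - 1)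
    have h7 := norm_mul_le (P h - 1) (P g - 1)
    have h8 := hle1 (g⁻¹ * h⁻¹)
    have n1 := norm_nonneg (P g - 1)
    have n2 := norm_nonneg (P h - 1)
    have h9 : ‖(P g - 1) * (P h - 1) - (P h - 1) * (P g - 1)‖ ≤ ‖P h - 1‖ / 2 := by nlinarith
    have n3 := norm_nonneg ((P g - 1) * (P h - 1) - (P h - 1) * (P g - 1))
    nlinarith [norm_nonneg (P (g⁻¹ * h⁻¹))]
  have hpos : 0 < ‖P h - 1‖ := by
    rw [norm_pos_iff]
    intro h0
    apply hne
    rw [sub_eq_zero.1 h0]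
    simp
  have hcc : P g * P c = P c * P g := by
    by_contra hcn
    have := hmin c ⟨by linarith, hcn⟩
    linarith
  -- so g commutes with h g h⁻¹
  set b := h * g * h⁻¹ with hb
  have hcg : c = g * b⁻¹ := by rw [hc, hb]; group
  have hgb : P g * P b = P b * P g := by
    have h1 : P (g * c) = P (c * g) := by rw [map_mul P g c, map_mul P c g, hcc]
    have h2 : P (b * g⁻¹ * (g * c) * b) = P (b * g⁻¹ * (c * g) * b) := by
      rw [map_mul, map_mul P (b * g⁻¹), h1, ← map_mul, ← map_mul]
    rw [← map_mul, ← map_mul]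
    have e1 : b * g⁻¹ * (g * c) * b = b * g := by rw [hcg]; group
    have e2 : b * g⁻¹ * (c * g) * b = g * b := by rw [hcg]; group
    rw [← e1, ← e2, h2]
  have hfin := nipaux_frobenius P hP g h hh hgb
  apply hne
  rw [← map_mul, ← map_mul]
  have e1 : h * g = (h * g * h⁻¹) * h := by group
  rw [e1, map_mul, map_mul P (h * g * h⁻¹), hfin]

/-- Jordan-type theorem, with Bohr neighbourhoods. -/
lemma nipaux_jordan (n : ℕ) : ∃ N : ℕ, ∀ (V : Type*) [NormedAddCommGroup V] [InnerProductSpace ℂ V]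
    [FiniteDimensional ℂ V] (G : Type*) [Group G] [Finite G] (P : G →* (V →L[ℂ] V)),
    Module.finrank ℂ V ≤ n → (∀ g v, ‖P g v‖ = ‖v‖) →
    ∃ H : Subgroup G, H.Normal ∧ H.index ≤ N ∧ ∃ m ≤ n, ∃ τ : H →* (Fin m → Circle),
      ∀ h : H, (∀ i, ‖(τ h i : ℂ) - 1‖ < 1 / 4) → ∀ v, ‖P h v - v‖ ≤ 1 / 4 * ‖v‖ := by
  obtain ⟨N, hN⟩ := nipaux_color (n * n) (1 / (4 * ((n : ℝ) + 1) * ((n : ℝ) + 1))) (by positivity)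
  refine ⟨N, ?_⟩
  intro V _ _ _ G _ _ P hn hP
  let U : Set G := {g | ‖P g - 1‖ ≤ 1 / 4}
  have hle1 : ∀ x, ‖P x‖ ≤ 1 := fun x =>
    ContinuousLinearMap.opNorm_le_bound _ zero_le_one (fun v => by rw [hP, one_mul])
  have hUconj : ∀ g ∈ U, ∀ x : G, x * g * x⁻¹ ∈ U := by
    intro g hg x
    simp only [U, Set.mem_ofPred_eq] at hg ⊢
    have h1 : P (x * g * x⁻¹) - 1 = P x * (P g - 1) * P x⁻¹ := by
      rw [mul_sub, sub_mul, mul_one, ← map_mul, ← map_mul, ← map_mul]; simp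
    rw [h1]
    have h2 := norm_mul_le (P x * (P g - 1)) (P x⁻¹)
    have h3 := norm_mul_le (P x) (P g - 1)
    have h4 := hle1 x
    have h5 := hle1 x⁻¹
    have n1 := norm_nonneg (P g - 1)
    have n2 := norm_nonneg (P x * (P g - 1))
    nlinarith
  let H : Subgroup G := Subgroup.closure U
  have hnorm : H.Normal := by
    refine ⟨fun a ha x => ?_⟩
    induction ha using Subgroup.closure_induction with
    | mem y hy => exact Subgroup.subset_closure (hUconj y hy x)
    | one => simpa using H.one_mem
    | mul y z _ _ hy hz =>
      have := H.mul_mem hy hz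
      have e1 : x * y * x⁻¹ * (x * z * x⁻¹) = x * (y * z) * x⁻¹ := by group
      rwa [e1] at this
    | inv y _ hy =>
      have := H.inv_mem hy
      have e1 : (x * y * x⁻¹)⁻¹ = x * y⁻¹ * x⁻¹ := by group
      rwa [e1] at this
  have hcomm : ∀ a ∈ H, ∀ b ∈ H, P a * P b = P b * P a := by
    intro a ha b hb
    have key : Commute (P.toHomUnits a) (P.toHomUnits b) := by
      induction ha, hb using Subgroup.closure_induction₂ with
      | mem x y hx hy => exact Units.ext (nipaux_near_commute P hP x y hx hy)
      | one_left x _ => rw [map_one]; exact Commute.one_left _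
      | one_right x _ => rw [map_one]; exact Commute.one_right _
      | mul_left x y z _ _ _ h1 h2 => rw [map_mul]; exact h1.mul_left h2
      | mul_right x y z _ _ _ h1 h2 => rw [map_mul]; exact h1.mul_right h2
      | inv_left x y _ _ h => rw [map_inv]; exact h.inv_left
      | inv_right x y _ _ h => rw [map_inv]; exact h.inv_right
    exact congrArg Units.val key
  refine ⟨H, hnorm, ?_, ?_⟩
  · -- index bound
    let e := stdOrthonormalBasis ℂ V
    let k := Module.finrank ℂ V
    obtain ⟨c, hc⟩ := hN (Fin k × Fin k) (by simp; exact Nat.mul_le_mul hn hn) G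
      (fun g ij => inner ℂ (e ij.1) (P g (e ij.2))) (by
        intro g ij
        refine (norm_inner_le_norm _ _).trans ?_
        rw [hP, e.orthonormal.1, e.orthonormal.1, one_mul])
    set r : ℝ := 1 / (4 * ((n : ℝ) + 1) * ((n : ℝ) + 1)) with hr
    have hrpos : 0 < r := by positivity
    have hkn : (k : ℝ) ≤ n + 1 := by
      have : (k : ℝ) ≤ n := by exact_mod_cast hn
      linarith
    have hclose : ∀ x y, c x = c y → ‖P x - P y‖ ≤ 1 / 4 := by
      intro x y hxy
      have h1 := hc x y hxy
      have h2 : ∀ j, ‖(P x - P y) (e j)‖ ≤ k * r := by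
        intro j
        rw [← e.sum_repr' ((P x - P y) (e j))]
        refine (norm_sum_le _ _).trans ?_
        have : ∑ _i : Fin k, r = k * r := by simp
        rw [← this]
        refine sum_le_sum fun i _ => ?_
        rw [norm_smul, e.orthonormal.1, mul_one, sub_apply, inner_sub_right]
        exact (h1 (i, j)).le
      refine ContinuousLinearMap.opNorm_le_bound _ (by norm_num) (fun v => ?_)
      calc ‖(P x - P y) v‖ = ‖∑ j, inner ℂ (e j) v • (P x - P y) (e j)‖ := by
            conv_lhs => rw [← e.sum_repr' v]
            simp only [map_sum, map_smul]
        _ ≤ ∑ j, ‖inner ℂ (e j) v • (P x - P y) (e j)‖ := norm_sum_le _ _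
        _ ≤ ∑ _j : Fin k, ‖v‖ * (k * r) := by
            refine sum_le_sum fun j _ => ?_
            rw [norm_smul]
            gcongr
            · refine (norm_inner_le_norm _ _).trans ?_
              rw [e.orthonormal.1, one_mul]
            · exact h2 j
        _ = (k * k * r) * ‖v‖ := by simp; ring
        _ ≤ 1 / 4 * ‖v‖ := by
            gcongr
            calc (k : ℝ) * k * r ≤ ((n : ℝ) + 1) * (n + 1) * r := by gcongr
              _ = 1 / 4 := by rw [hr]; field_simp
    have hinj : Function.Injective (fun q : G ⧸ H => c q.out) := by
      intro q q' h
      have h1 := hclose _ _ h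
      rw [← QuotientGroup.out_eq' q, ← QuotientGroup.out_eq' q', QuotientGroup.eq]
      apply Subgroup.subset_closure
      show ‖P (q.out⁻¹ * q'.out) - 1‖ ≤ 1 / 4
      have e1 : P (q.out⁻¹ * q'.out) - 1 = P q.out⁻¹ * (P q'.out - P q.out) := by
        rw [mul_sub, ← map_mul, ← map_mul]; simp
      rw [e1]
      rw [norm_sub_rev] at h1
      have h2 := norm_mul_le (P q.out⁻¹) (P q'.out - P q.out)
      have h3 := hle1 q.out⁻¹
      nlinarith [norm_nonneg (P q'.out - P q.out)]
    have := Nat.card_le_card_of_injective _ hinj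
    simpa [Subgroup.index] using this
  · obtain ⟨k, hk, e, he⟩ := nipaux_diag (fun h : H => P h) (by
      intro i j v
      have := congrArg (fun S : V →L[ℂ] V => S v) (hcomm i i.2 j j.2)
      simpa using this) (fun h v => hP h v)
    have hev : ∀ (h : H) j, P h (e j) = inner ℂ (e j) (P h (e j)) • e j := by
      intro h j
      obtain ⟨c, hc⟩ := he j h
      rw [hc, inner_smul_right, inner_self_eq_norm_sq_to_K, e.orthonormal.1 j]
      simp
    let τ : H →* (Fin k → Circle) :=
      { toFun := fun h j => ⟨inner ℂ (e j) (P h (e j)), by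
          have h1 := hP h (e j)
          rw [hev h j, norm_smul, e.orthonormal.1 j, mul_one] at h1
          exact mem_sphere_zero_iff_norm.2 h1⟩
        map_one' := by
          funext j
          apply Circle.ext
          simp [inner_self_eq_norm_sq_to_K, e.orthonormal.1 j]
        map_mul' := by
          intro a b
          funext j
          apply Circle.ext
          show inner ℂ (e j) (P (a * b : H) (e j)) =
            inner ℂ (e j) (P a (e j)) * inner ℂ (e j) (P b (e j))
          rw [Subgroup.coe_mul, map_mul, mul_apply_eq_comp, hev b j, map_smul,
            inner_smul_right, inner_smul_right, inner_self_eq_norm_sq_to_K, e.orthonormal.1 j]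
          simp [mul_comm] }
    refine ⟨k, hk.trans hn, τ, ?_⟩
    intro h hh v
    exact nipaux_diag_bound e (P h) (fun j => inner ℂ (e j) (P h (e j))) (hev h) (1 / 4)
      (by norm_num) (fun j => (hh j).le) v

end PartB

section PartC
open Finset

/-- A large symmetric set `S` yields an invariant subspace of bounded dimension controlling `S^4`. -/
lemma nipaux_spectral {G : Type*} [Group G] [Fintype G] [DecidableEq G] (S : Finset G) (N : ℕ)
    (hN : 0 < N) (hS : Fintype.card G ≤ N * S.card) (hsymm : ∀ g, g ∈ S → g⁻¹ ∈ S) :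
    ∃ V : Submodule ℂ (EuclideanSpace ℂ G), Module.finrank ℂ V ≤ 16 * N ^ 4 ∧
      ∃ P : G →* (V →L[ℂ] V), (∀ g v, ‖P g v‖ = ‖v‖) ∧
        ∀ g, (∀ v, ‖P g v - v‖ ≤ 1 / 4 * ‖v‖) →
          ∃ x ∈ S, ∃ y ∈ S, ∃ z ∈ S, ∃ w ∈ S, g = x * y * (z * w) := by
  classical
  let M : Matrix G G ℂ := Matrix.of fun x y => if x⁻¹ * y ∈ S then 1 else 0
  have hMapp : ∀ x y, M x y = if x⁻¹ * y ∈ S then 1 else 0 := fun x y => rfl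
  have hM : M.IsHermitian := by
    ext x y
    rw [Matrix.conjTranspose_apply, hMapp, hMapp]
    have : y⁻¹ * x ∈ S ↔ x⁻¹ * y ∈ S := by
      constructor
      · intro h; simpa using hsymm _ h
      · intro h; simpa using hsymm _ h
    by_cases h : x⁻¹ * y ∈ S <;> simp [this, h]
  obtain ⟨n, hn⟩ : ∃ n : ℝ, n = (Fintype.card G : ℝ) := ⟨_, rfl⟩
  have hnpos : 0 < n := by rw [hn]; exact_mod_cast Fintype.card_pos
  have hNpos : (0 : ℝ) < N := by exact_mod_cast hN
  let T : EuclideanSpace ℂ G →ₗ[ℂ] EuclideanSpace ℂ G := Matrix.toEuclideanLin M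
  have hT : ∀ v x, T v x = ∑ y, M x y * v y := by
    intro v x
    simp [T, Matrix.toEuclideanLin, Matrix.toLpLin_apply, Matrix.mulVec, dotProduct]
  have hTsymm : ∀ v w : EuclideanSpace ℂ G, inner ℂ (T v) w = inner ℂ v (T w) := by
    have := Matrix.isSymmetric_toEuclideanLin_iff.2 hM
    exact this
  let b := hM.eigenvectorBasis
  let l : G → ℝ := hM.eigenvalues
  have hb : ∀ i, T (b i) = (l i : ℂ) • b i := by
    intro i
    ext x
    have := congrFun (hM.mulVec_eigenvectorBasis i) x
    rw [hT]
    simpa [Matrix.mulVec, dotProduct] using this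
  let L : G → EuclideanSpace ℂ G ≃ₗᵢ[ℂ] EuclideanSpace ℂ G := fun g => LinearIsometryEquiv.piLpCongrLeft 2 ℂ ℂ (Equiv.mulLeft g)
  have hL : ∀ g (v : EuclideanSpace ℂ G) x, L g v x = v (g⁻¹ * x) := by
    intro g v x
    simp [L, LinearIsometryEquiv.piLpCongrLeft_apply]
  have hTL : ∀ g v, T (L g v) = L g (T v) := by
    intro g v
    ext x
    rw [hT, hL, hT]
    refine Fintype.sum_equiv (Equiv.mulLeft g⁻¹) _ _ fun y => ?_
    rw [hL, hMapp, hMapp]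
    simp [mul_assoc]
  set c : ℝ := n / (4 * N ^ 2) with hc
  have hcpos : 0 < c := by positivity
  let I : Finset G := univ.filter (fun i => c ≤ |l i|)
  have hI : ∀ i, i ∈ I ↔ c ≤ |l i| := by simp [I]
  let V : Submodule ℂ (EuclideanSpace ℂ G) :=
    Submodule.span ℂ (I.image b : Finset (EuclideanSpace ℂ G))
  have hbV : ∀ i ∈ I, b i ∈ V := fun i hi => Submodule.subset_span (by
    rw [coe_image]; exact ⟨i, hi, rfl⟩)
  have hVof : ∀ v : EuclideanSpace ℂ G, (∀ j, j ∉ I → inner ℂ (b j) v = 0) → v ∈ V := by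
    intro v hv
    rw [← b.sum_repr' v]
    refine Submodule.sum_mem _ fun i _ => ?_
    by_cases hi : i ∈ I
    · exact Submodule.smul_mem _ _ (hbV i hi)
    · rw [hv i hi, zero_smul]; exact Submodule.zero_mem _
  have hLV : ∀ g, ∀ v ∈ V, L g v ∈ V := by
    intro g v hv
    induction hv using Submodule.span_induction with
    | mem x hx =>
      rw [coe_image] at hx
      obtain ⟨i, hi, rfl⟩ := hx
      apply hVof
      intro j hj
      have h1 := hTsymm (b j) (L g (b i))
      rw [hTL, hb, hb, map_smul, inner_smul_left, inner_smul_right, Complex.conj_ofReal] at h1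
      have h2 : ((l j : ℂ) - l i) * inner ℂ (b j) (L g (b i)) = 0 := by
        rw [sub_mul, h1, sub_self]
      rcases mul_eq_zero.1 h2 with h | h
      · exfalso
        have h3 : l j = l i := by exact_mod_cast sub_eq_zero.1 h
        rw [hI, h3] at hj
        exact hj ((hI i).1 hi)
      · exact h
    | zero => rw [map_zero]; exact V.zero_mem
    | add x y _ _ hx hy => rw [map_add]; exact V.add_mem hx hy
    | smul a x _ hx => rw [map_smul]; exact V.smul_mem _ hx
  -- dimension bound
  have hHS : ∑ i, (l i) ^ 2 ≤ n ^ 2 := by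
    have h1 : ∀ i, (l i) ^ 2 = ∑ x, ‖T (b i) x‖ ^ 2 := by
      intro i
      rw [← EuclideanSpace.norm_sq_eq, hb, norm_smul, b.orthonormal.1 i]
      simp
    simp_rw [h1]
    rw [sum_comm]
    have h2 : ∀ x, ∑ i, ‖T (b i) x‖ ^ 2 ≤ n := by
      intro x
      let row : EuclideanSpace ℂ G := WithLp.toLp 2 (fun y => M x y)
      have h3 : ∀ i, T (b i) x = inner ℂ row (b i) := by
        intro i
        rw [hT]
        simp only [row, PiLp.inner_apply, RCLike.inner_apply]
        refine sum_congr rfl fun y _ => ?_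
        rw [hMapp]
        split_ifs <;> simp
      simp_rw [h3]
      have h4 := b.sum_sq_norm_inner_left row
      rw [h4, EuclideanSpace.norm_sq_eq]
      calc ∑ y, ‖row y‖ ^ 2 ≤ ∑ _y : G, (1 : ℝ) := by
            refine sum_le_sum fun y _ => ?_
            simp only [row, hMapp]
            split_ifs <;> simp
        _ = n := by simp [hn]
    calc ∑ x, ∑ i, ‖T (b i) x‖ ^ 2 ≤ ∑ _x : G, n := sum_le_sum fun x _ => h2 x
      _ = n ^ 2 := by simp [hn]; ring
  have hIcard : (I.card : ℝ) ≤ 16 * N ^ 4 := by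
    have h1 : (I.card : ℝ) * c ^ 2 ≤ n ^ 2 := by
      calc (I.card : ℝ) * c ^ 2 = ∑ _i ∈ I, c ^ 2 := by simp
        _ ≤ ∑ i ∈ I, (l i) ^ 2 := by
            refine sum_le_sum fun i hi => ?_
            rw [← sq_abs (l i)]
            exact pow_le_pow_left₀ hcpos.le ((hI i).1 hi) 2
        _ ≤ ∑ i, (l i) ^ 2 := sum_le_sum_of_subset_of_nonneg (subset_univ _) (fun _ _ _ => sq_nonneg _)
        _ ≤ n ^ 2 := hHS
    have h2 : n ^ 2 = 16 * N ^ 4 * c ^ 2 := by rw [hc]; field_simp; norm_num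
    rw [h2] at h1
    exact le_of_mul_le_mul_right h1 (by positivity)
  refine ⟨V, ?_, ?_⟩
  · have h1 := finrank_span_finset_le_card (R := ℂ) (I.image b)
    have h2 : I.card ≤ 16 * N ^ 4 := by exact_mod_cast hIcard
    exact h1.trans (card_image_le.trans h2)
  let P : G →* (V →L[ℂ] V) :=
    { toFun := fun g => LinearMap.toContinuousLinearMap
        ((L g).toLinearEquiv.toLinearMap.restrict (hLV g))
      map_one' := by
        ext v x
        show L 1 (v : EuclideanSpace ℂ G) x = (v : EuclideanSpace ℂ G) x
        rw [hL]; simp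
      map_mul' := by
        intro g h
        ext v x
        show L (g * h) (v : EuclideanSpace ℂ G) x = L g (L h (v : EuclideanSpace ℂ G)) x
        rw [hL, hL, hL]; simp [mul_assoc] }
  have hPval : ∀ g (v : V), ((P g v : V) : EuclideanSpace ℂ G) = L g v := fun g v => rfl
  refine ⟨P, ?_, ?_⟩
  · intro g v
    show ‖((P g v : V) : EuclideanSpace ℂ G)‖ = _
    rw [hPval, LinearIsometryEquiv.norm_map]; rfl
  intro g hg
  have hg' : ∀ v ∈ V, ‖L g v - v‖ ≤ 1 / 4 * ‖v‖ := fun v hv => hg ⟨v, hv⟩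
  let f : EuclideanSpace ℂ G := WithLp.toLp 2 (fun y => if y ∈ S then 1 else 0)
  have hf : ∀ y, f y = if y ∈ S then 1 else 0 := fun y => rfl
  have hfnorm : ‖f‖ ^ 2 ≤ n := by
    rw [EuclideanSpace.norm_sq_eq]
    calc ∑ y, ‖f y‖ ^ 2 ≤ ∑ _y : G, (1 : ℝ) := by
          refine sum_le_sum fun y _ => ?_
          rw [hf]
          split_ifs <;> simp
      _ = n := by simp [hn]
  set F : EuclideanSpace ℂ G := T f with hF
  -- lower bound for the norm of F
  have hsum : ∑ x, F x = ((S.card : ℂ)) ^ 2 := by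
    simp_rw [hF, hT]
    rw [sum_comm]
    have : ∀ y, ∑ x, M x y * f y = (S.card : ℂ) * f y := by
      intro y
      rw [← sum_mul]
      congr 1
      have : ∑ x, M x y = ∑ x, if x ∈ S then (1 : ℂ) else 0 := by
        refine Fintype.sum_equiv ((Equiv.inv G).trans (Equiv.mulRight y)) _ _ fun x => ?_
        rw [hMapp]; simp
      rw [this]; simp
    simp_rw [this]
    rw [← mul_sum]
    simp_rw [hf]
    simp [sq]
  have hFlow : ((S.card : ℝ)) ^ 4 ≤ n * ‖F‖ ^ 2 := by
    have h1 : ((S.card : ℝ)) ^ 2 ≤ ∑ x, ‖F x‖ := by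
      have := norm_sum_le univ (fun x => F x)
      rw [hsum] at this
      simpa using this
    have h2 := sq_sum_le_card_mul_sum_sq (s := (univ : Finset G)) (f := fun x => ‖F x‖)
    rw [card_univ, ← EuclideanSpace.norm_sq_eq, ← hn] at h2
    have h3 := pow_le_pow_left₀ (by positivity) h1 2
    calc ((S.card : ℝ)) ^ 4 = (((S.card : ℝ)) ^ 2) ^ 2 := by ring
      _ ≤ _ := h3
      _ ≤ _ := h2
  have hFpos : 0 < ‖F‖ := by
    have hSpos : 0 < S.card := by
      rcases Nat.eq_zero_or_pos S.card with h | h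
      · rw [h, mul_zero] at hS
        have : 0 < Fintype.card G := Fintype.card_pos
        omega
      · exact h
    have : (0 : ℝ) < (S.card : ℝ) ^ 4 := by positivity
    rcases (norm_nonneg F).eq_or_lt with h | h
    · rw [← h] at hFlow; norm_num at hFlow; linarith
    · exact h
  have hcf : 2 * (c * ‖f‖) ≤ ‖F‖ / 2 := by
    have hS' : n ≤ N * S.card := by rw [hn]; exact_mod_cast hS
    have h1 : n ^ 4 ≤ N ^ 4 * (n * ‖F‖ ^ 2) := by
      calc n ^ 4 ≤ (N * S.card) ^ 4 := pow_le_pow_left₀ hnpos.le hS' 4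
        _ = N ^ 4 * (S.card : ℝ) ^ 4 := by ring
        _ ≤ _ := by gcongr
    have h2 : n ^ 3 ≤ N ^ 4 * ‖F‖ ^ 2 := by
      have : n * n ^ 3 ≤ n * (N ^ 4 * ‖F‖ ^ 2) := by nlinarith
      exact le_of_mul_le_mul_left this hnpos
    have h3 : (2 * (c * ‖f‖)) ^ 2 ≤ (‖F‖ / 2) ^ 2 := by
      calc (2 * (c * ‖f‖)) ^ 2 = 4 * c ^ 2 * ‖f‖ ^ 2 := by ring
        _ ≤ 4 * c ^ 2 * n := by gcongr
        _ = n ^ 3 / (4 * N ^ 4) := by rw [hc]; field_simp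
        _ ≤ N ^ 4 * ‖F‖ ^ 2 / (4 * N ^ 4) := by gcongr
        _ = (‖F‖ / 2) ^ 2 := by field_simp; norm_num
    exact le_of_sq_le_sq h3 (by positivity)
  -- decomposition
  let u : EuclideanSpace ℂ G := ∑ i, (if i ∈ I then inner ℂ (b i) F else 0) • b i
  have hu : ∀ j, inner ℂ (b j) u = if j ∈ I then inner ℂ (b j) F else 0 := fun j =>
    b.orthonormal.inner_right_fintype _ j
  have huV : u ∈ V := hVof u fun j hj => by rw [hu, if_neg hj]
  have hun : ‖u‖ ≤ ‖F‖ := by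
    refine le_of_sq_le_sq ?_ (norm_nonneg _)
    rw [← b.sum_sq_norm_inner_right u, ← b.sum_sq_norm_inner_right F]
    refine sum_le_sum fun j _ => ?_
    rw [hu]
    split_ifs
    · exact le_rfl
    · simp
  have hr : ‖F - u‖ ≤ c * ‖f‖ := by
    refine le_of_sq_le_sq ?_ (by positivity)
    rw [mul_pow, ← b.sum_sq_norm_inner_right (F - u), ← b.sum_sq_norm_inner_right f, mul_sum]
    refine sum_le_sum fun j _ => ?_
    rw [inner_sub_right, hu]
    split_ifs with hj
    · rw [sub_self]; simp only [norm_zero]; simpa using (by positivity : 0 ≤ c ^ 2 * ‖inner ℂ (b j) f‖ ^ 2)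
    · rw [sub_zero, hF, ← hTsymm, hb, inner_smul_left, Complex.conj_ofReal, norm_mul, mul_pow]
      rw [hI] at hj
      push Not at hj
      gcongr
      simpa using hj.le
  have hsmall : ‖L g F - F‖ < ‖F‖ := by
    have h1 : L g F - F = (L g u - u) + (L g (F - u) - (F - u)) := by
      rw [map_sub]; abel
    have h2 : ‖L g (F - u) - (F - u)‖ ≤ 2 * (c * ‖f‖) := by
      refine (norm_sub_le _ _).trans ?_
      rw [LinearIsometryEquiv.norm_map]
      linarith
    have h3 := hg' u huV
    rw [h1]
    refine (norm_add_le _ _).trans_lt ?_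
    linarith
  -- supports intersect
  have hinter : ∃ x, F x ≠ 0 ∧ L g F x ≠ 0 := by
    by_contra hno
    push Not at hno
    have h1 : ‖F‖ ^ 2 ≤ ‖L g F - F‖ ^ 2 := by
      rw [EuclideanSpace.norm_sq_eq, EuclideanSpace.norm_sq_eq]
      refine sum_le_sum fun x _ => ?_
      by_cases hx : F x = 0
      · rw [hx, norm_zero]; simp
      · rw [PiLp.sub_apply, hno x hx, zero_sub, norm_neg]
    have := le_of_sq_le_sq h1 (norm_nonneg _)
    linarith
  have hsupp : ∀ x, F x ≠ 0 → ∃ y ∈ S, ∃ z ∈ S, x = y * z := by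
    intro x hx
    rw [hF, hT] at hx
    obtain ⟨y, _, hy⟩ := exists_ne_zero_of_sum_ne_zero hx
    rw [hMapp, hf] at hy
    by_cases h1 : x⁻¹ * y ∈ S
    · by_cases h2 : y ∈ S
      · exact ⟨y, h2, (x⁻¹ * y)⁻¹, hsymm _ h1, by group⟩
      · simp [h2] at hy
    · simp [h1] at hy
  obtain ⟨x, hx1, hx2⟩ := hinter
  rw [hL] at hx2
  obtain ⟨y, hy, z, hz, hxyz⟩ := hsupp _ hx1
  obtain ⟨y', hy', z', hz', hxyz'⟩ := hsupp _ hx2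
  refine ⟨y, hy, z, hz, z'⁻¹, hsymm _ hz', y'⁻¹, hsymm _ hy', ?_⟩
  rw [← hxyz, ← mul_inv_rev, ← hxyz']
  group

end PartC
section PartF
open Finset
/-- The number of `b ∈ B` for which `x` and `x * b` are separated by `A`. -/
def nipQ {G : Type*} [Group G] [DecidableEq G] (A B : Finset G) (x : G) : ℕ :=
  (B.filter (fun b => ¬(x ∈ A ↔ x * b ∈ A))).card

lemma nipaux_qsum {G : Type*} [Group G] [Fintype G] [DecidableEq G] (A B : Finset G) (η : ℝ)
    (h : ∀ b ∈ B, ((univ.filter (fun x => ¬(x ∈ A ↔ x * b ∈ A))).card : ℝ)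
      ≤ η * Fintype.card G) :
    ∑ x, (nipQ A B x : ℝ) ≤ η * Fintype.card G * B.card := by
  have h1 : ∑ x, (nipQ A B x : ℝ)
      = ∑ b ∈ B, ((univ.filter (fun x => ¬(x ∈ A ↔ x * b ∈ A))).card : ℝ) := by
    simp only [nipQ, card_filter]
    push_cast
    rw [sum_comm]
  rw [h1]
  calc _ ≤ ∑ _b ∈ B, η * Fintype.card G := sum_le_sum h
    _ = _ := by rw [sum_const, nsmul_eq_mul, mul_comm]

lemma nipaux_regular {G : Type*} [Group G] [Fintype G] [DecidableEq G] (A B : Finset G)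
    (ε η : ℝ) (hε : 0 < ε) (hη : η ≤ ε ^ 2) (hB : 0 < B.card)
    (h : ∀ b ∈ B, ((univ.filter (fun x => ¬(x ∈ A ↔ x * b ∈ A))).card : ℝ)
      ≤ η * Fintype.card G) :
    ∃ Z : Finset G, (Z.card : ℝ) ≤ ε * Fintype.card G ∧ ∀ g, g ∉ Z →
      ((((g • B) ∩ A).card : ℝ) < ε * B.card ∨ (((g • B) \ A).card : ℝ) < ε * B.card) := by
  have hB' : (0 : ℝ) < B.card := by exact_mod_cast hB
  refine ⟨univ.filter (fun x => ε * B.card ≤ nipQ A B x), ?_, ?_⟩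
  · have h1 := nipaux_qsum A B η h
    have h2 : ((univ.filter (fun x => ε * B.card ≤ nipQ A B x)).card : ℝ) * (ε * B.card)
        ≤ ∑ x, (nipQ A B x : ℝ) := by
      rw [← nsmul_eq_mul, ← sum_const]
      refine (sum_le_sum (fun x hx => (mem_filter.1 hx).2)).trans ?_
      exact sum_le_sum_of_subset_of_nonneg (subset_univ _) (fun _ _ _ => Nat.cast_nonneg _)
    have h3 : η * Fintype.card G * B.card ≤ ε * Fintype.card G * (ε * B.card) := by
      have : η * (Fintype.card G * B.card) ≤ ε ^ 2 * (Fintype.card G * B.card) := by gcongr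
      nlinarith
    exact le_of_mul_le_mul_right (h2.trans (h1.trans h3)) (by positivity)
  · intro g hg
    simp only [mem_filter, mem_univ, true_and, not_le] at hg
    by_cases hgA : g ∈ A
    · right
      refine lt_of_le_of_lt ?_ hg
      have : (g • B) \ A ⊆ (B.filter (fun b => ¬(g ∈ A ↔ g * b ∈ A))).image (fun b => g * b) := by
        intro x hx
        rw [mem_sdiff, mem_smul_finset] at hx
        obtain ⟨⟨b, hb, rfl⟩, hx⟩ := hx
        rw [smul_eq_mul] at hx
        exact mem_image.2 ⟨b, mem_filter.2 ⟨hb, by tauto⟩, rfl⟩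
      exact_mod_cast (card_le_card this).trans card_image_le
    · left
      refine lt_of_le_of_lt ?_ hg
      have : (g • B) ∩ A ⊆ (B.filter (fun b => ¬(g ∈ A ↔ g * b ∈ A))).image (fun b => g * b) := by
        intro x hx
        rw [mem_inter, mem_smul_finset] at hx
        obtain ⟨⟨b, hb, rfl⟩, hx⟩ := hx
        rw [smul_eq_mul] at hx
        exact mem_image.2 ⟨b, mem_filter.2 ⟨hb, by tauto⟩, rfl⟩
      exact_mod_cast (card_le_card this).trans card_image_le

lemma nipaux_structure {G : Type*} [Group G] [Fintype G] [DecidableEq G] (A B : Finset G)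
    (ε η K : ℝ) (hε : 0 < ε) (hε1 : ε < 1) (hη : η = ε ^ 2 / 22) (hB : 0 < B.card)
    (hK : (Fintype.card G : ℝ) ≤ K * B.card)
    (hsymm : ∀ b, b ∈ B → b⁻¹ ∈ B)
    (h : ∀ b ∈ B, ((univ.filter (fun x => ¬(x ∈ A ↔ x * b ∈ A))).card : ℝ)
      ≤ η * Fintype.card G) :
    ∃ F : Finset G, (F.card : ℝ) ≤ 8 / ε * K + 1 ∧
      ((symmDiff A (F * B)).card : ℝ) < ε * Fintype.card G := by
  have hB' : (0 : ℝ) < B.card := by exact_mod_cast hB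
  obtain ⟨β, hβ⟩ : ∃ β : ℝ, β = B.card := ⟨_, rfl⟩
  obtain ⟨n, hn⟩ : ∃ n : ℝ, n = Fintype.card G := ⟨_, rfl⟩
  have hnpos : 0 < n := by rw [hn]; exact_mod_cast Fintype.card_pos
  have hqs := nipaux_qsum A B η h
  rw [← hβ] at hK hB' hqs
  rw [← hn] at hK hqs ⊢
  have hβn : β ≤ n := by rw [hβ, hn]; exact_mod_cast card_le_univ B
  let k := ⌈8 / ε * (n / β)⌉₊
  have hk1 : 8 / ε * (n / β) ≤ k := Nat.le_ceil _
  have hk2 : (k : ℝ) ≤ 8 / ε * (n / β) + 1 := (Nat.ceil_lt_add_one (by positivity)).le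
  have hkK : (k : ℝ) ≤ 8 / ε * K + 1 := by
    have : n / β ≤ K := by rw [div_le_iff₀ hB']; exact hK
    have : 8 / ε * (n / β) ≤ 8 / ε * K := by gcongr
    linarith
  let W : G → Finset G := fun x => univ.filter (fun y => y ∈ A ∧ y⁻¹ * x ∈ B)
  have hW : ∀ x, (W x).card = (B.filter (fun b => x * b ∈ A)).card := by
    intro x
    refine card_bij' (fun y _ => x⁻¹ * y) (fun b _ => x * b) ?_ ?_ ?_ ?_
    · intro y hy
      simp only [W, mem_filter, mem_univ, true_and] at hy ⊢
      refine ⟨by simpa using hsymm _ hy.2, by simpa using hy.1⟩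
    · intro b hb
      simp only [W, mem_filter, mem_univ, true_and] at hb ⊢
      refine ⟨hb.2, by simpa using hsymm _ hb.1⟩
    · intro y _; simp
    · intro b _; simp
  have hW1 : ∀ x ∉ A, (W x).card = nipQ A B x := by
    intro x hx
    rw [hW, nipQ]
    congr 1
    ext b
    simp [hx]
  have hW2 : ∀ x ∈ A, ((W x).card : ℝ) = β - nipQ A B x := by
    intro x hx
    have := card_filter_add_card_filter_not (s := B) (fun b => x * b ∈ A)
    rw [← hW] at this
    have h2 : nipQ A B x = (B.filter (fun b => ¬ (x * b ∈ A))).card := by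
      rw [nipQ]; congr 1; ext b; simp [hx]
    rw [h2, hβ, ← this]; push_cast; ring
  let c : G → ℝ := fun x => ((univ.filter (fun f : Fin k → G => ¬(x ∈ A ↔ ∃ i, f i ∈ W x))).card : ℝ)
  have hWn : ∀ x, ((W x).card : ℝ) ≤ n := fun x => by rw [hn]; exact_mod_cast card_le_univ _
  have hav : ∀ x, ((univ.filter (fun f : Fin k → G => ¬ ∃ i, f i ∈ W x)).card : ℝ)
      = n ^ k * (1 - (W x).card / n) ^ k := by
    intro x
    have h1 := nipaux_card_avoid k (W x)ᶜ
    have h2 : (univ.filter (fun f : Fin k → G => ¬ ∃ i, f i ∈ W x))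
        = univ.filter (fun f : Fin k → G => ∀ i, f i ∈ (W x)ᶜ) := by
      ext f; simp
    rw [h2, h1, ← mul_pow, card_compl]
    push_cast [Nat.cast_sub (card_le_univ (W x))]
    rw [← hn]
    congr 1
    field_simp
  have htot : (Fintype.card (Fin k → G) : ℝ) = n ^ k := by
    rw [Fintype.card_fun, Fintype.card_fin, hn]; push_cast; rfl
  have hc : ∀ x, c x ≤ n ^ k * (ε / 4 + (2 / β + k / n) * nipQ A B x) := by
    intro x
    have hq0 : (0 : ℝ) ≤ nipQ A B x := Nat.cast_nonneg _
    have hcn : c x ≤ n ^ k := by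
      rw [← htot]; exact Nat.cast_le.2 (card_le_univ _)
    by_cases hx : x ∈ A
    · by_cases hq : β / 2 ≤ nipQ A B x
      · refine hcn.trans ?_
        have h1 : 1 ≤ 2 / β * nipQ A B x := by
          calc 1 = 2 / β * (β / 2) := by field_simp
            _ ≤ _ := by gcongr
        have h2 : 0 ≤ k / n * nipQ A B x := by positivity
        have h3 : 1 ≤ ε / 4 + (2 / β + k / n) * nipQ A B x := by rw [add_mul]; linarith
        exact le_mul_of_one_le_right (by positivity) h3
      · push Not at hq
        have h1 : c x = n ^ k * (1 - (W x).card / n) ^ k := by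
          rw [← hav]; simp only [c, hx, true_iff]
        have hp : β / 2 ≤ (W x).card := by rw [hW2 x hx]; linarith
        obtain ⟨p, hpd⟩ : ∃ p : ℝ, p = (W x).card / n := ⟨_, rfl⟩
        have hp1 : p ≤ 1 := by rw [hpd, div_le_one hnpos]; exact hWn x
        have hp2 : β / (2 * n) ≤ p := by
          rw [hpd, div_le_div_iff₀ (by positivity) hnpos]; nlinarith
        rw [h1, ← hpd]
        have h2 : (1 - p) ^ k ≤ Real.exp (-(k * p)) := by
          calc (1 - p) ^ k ≤ (Real.exp (-p)) ^ k :=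
                pow_le_pow_left₀ (by linarith) (Real.one_sub_le_exp_neg p) k
            _ = _ := by rw [← Real.exp_nat_mul]; congr 1; ring
        have h3 : 4 / ε ≤ k * p := by
          calc 4 / ε = 8 / ε * (n / β) * (β / (2 * n)) := by field_simp; norm_num
            _ ≤ _ := by gcongr
        have h4 : Real.exp (-(k * p)) ≤ ε / 4 := by
          rw [Real.exp_neg, inv_le_comm₀ (Real.exp_pos _) (by positivity)]
          have := Real.add_one_le_exp (k * p)
          have h5 : (ε / 4)⁻¹ = 4 / ε := by rw [inv_div]
          rw [h5]; linarith
        have h6 : 0 ≤ (2 / β + k / n) * nipQ A B x := by positivity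
        gcongr
        linarith
    · have h1 : c x = n ^ k - n ^ k * (1 - (W x).card / n) ^ k := by
        rw [← hav, ← htot, eq_sub_iff_add_eq]
        have := card_filter_add_card_filter_not (s := (univ : Finset (Fin k → G)))
          (fun f => ∃ i, f i ∈ W x)
        rw [card_univ] at this
        rw [← this]
        simp only [c, hx, false_iff, not_not]
        push_cast; rfl
      rw [h1, hW1 x hx]
      have hp1 : (nipQ A B x : ℝ) / n ≤ 1 := by
        rw [div_le_one hnpos, ← hW1 x hx]; exact hWn x
      have h2 := one_add_mul_le_pow (a := -((nipQ A B x : ℝ) / n)) (by linarith) k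
      have h3 : 1 - (1 - (nipQ A B x : ℝ) / n) ^ k ≤ k / n * nipQ A B x := by
        have : k / n * (nipQ A B x : ℝ) = k * (nipQ A B x / n) := by ring
        rw [this, sub_eq_add_neg 1 ((nipQ A B x : ℝ) / n)]
        linarith
      have h4 : 0 ≤ 2 / β * nipQ A B x := by positivity
      rw [← mul_one_sub]
      gcongr
      rw [add_mul]; linarith
  have hcsum : ∑ x, c x < n ^ k * (ε * n) := by
    calc ∑ x, c x ≤ ∑ x, n ^ k * (ε / 4 + (2 / β + k / n) * nipQ A B x) :=
          sum_le_sum fun x _ => hc x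
      _ = n ^ k * (ε / 4 * n + (2 / β + k / n) * ∑ x, (nipQ A B x : ℝ)) := by
          rw [← mul_sum, sum_add_distrib, ← mul_sum, sum_const, card_univ, nsmul_eq_mul, ← hn]
          ring
      _ < n ^ k * (ε * n) := by
          have h1 : (2 / β + k / n) * ∑ x, (nipQ A B x : ℝ) ≤ ε / 2 * n := by
            calc _ ≤ (2 / β + k / n) * (η * n * β) := by gcongr
              _ = η * (2 * n + k * β) := by field_simp
              _ ≤ η * (2 * n + (8 / ε * (n / β) + 1) * β) := by
                  have : 0 ≤ η := by rw [hη]; positivity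
                  gcongr
              _ = η * ((2 + 8 / ε) * n + β) := by field_simp; ring
              _ ≤ η * ((2 + 8 / ε) * n + n) := by
                  have : 0 ≤ η := by rw [hη]; positivity
                  gcongr
              _ = (3 * ε ^ 2 + 8 * ε) / 22 * n := by rw [hη]; field_simp; ring
              _ ≤ ε / 2 * n := by
                  refine mul_le_mul_of_nonneg_right ?_ hnpos.le
                  nlinarith
          have h2 : 0 < ε * n := by positivity
          gcongr
          linarith
  have hdbl : ∑ x, c x = ∑ f : Fin k → G,
      ((univ.filter (fun x => ¬(x ∈ A ↔ ∃ i, f i ∈ W x))).card : ℝ) := by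
    simp only [c, card_filter]
    push_cast
    rw [sum_comm]
  rw [hdbl] at hcsum
  have hex : ∃ f : Fin k → G,
      ((univ.filter (fun x => ¬(x ∈ A ↔ ∃ i, f i ∈ W x))).card : ℝ) < ε * n := by
    by_contra hno
    replace hno : ∀ f : Fin k → G, ε * n
        ≤ ((univ.filter (fun x => ¬(x ∈ A ↔ ∃ i, f i ∈ W x))).card : ℝ) :=
      fun f => not_lt.1 fun hlt => hno ⟨f, hlt⟩
    have := sum_le_sum (s := (univ : Finset (Fin k → G))) (fun f _ => hno f)
    rw [sum_const, card_univ, nsmul_eq_mul, htot] at this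
    linarith
  obtain ⟨f, hf⟩ := hex
  refine ⟨(univ.image f).filter (fun y => y ∈ A), ?_, ?_⟩
  · refine le_trans ?_ hkK
    have : ((univ.image f).filter (fun y => y ∈ A)).card ≤ k := by
      refine (card_filter_le _ _).trans (card_image_le.trans ?_)
      simp
    exact_mod_cast this
  · refine lt_of_le_of_lt ?_ hf
    have : symmDiff A ((univ.image f).filter (fun y => y ∈ A) * B)
        ⊆ univ.filter (fun x => ¬(x ∈ A ↔ ∃ i, f i ∈ W x)) := by
      intro x hx
      have key : x ∈ (univ.image f).filter (fun y => y ∈ A) * B ↔ ∃ i, f i ∈ W x := by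
        rw [mem_mul]
        constructor
        · rintro ⟨y, hy, b, hb, rfl⟩
          rw [mem_filter, mem_image] at hy
          obtain ⟨⟨i, _, rfl⟩, hy⟩ := hy
          exact ⟨i, by simp [W, hy, hb]⟩
        · rintro ⟨i, hi⟩
          simp only [W, mem_filter, mem_univ, true_and] at hi
          exact ⟨f i, by simp [hi.1], _, hi.2, by simp⟩
      rw [mem_symmDiff, key] at hx
      refine mem_filter.2 ⟨mem_univ _, fun hiff => ?_⟩
      rcases hx with ⟨h1, h2⟩ | ⟨h1, h2⟩
      · exact h2 (hiff.1 h1)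
      · exact h2 (hiff.2 h1)
    exact Nat.cast_le.2 (card_le_card this)

end PartF
section PartG
open Finset

lemma nipaux_bohr_large {H : Type*} [Group H] [Fintype H] (m N : ℕ)
    (τ : H →* (Fin m → Circle)) (BH : Finset H)
    (hBH : ∀ h, h ∈ BH ↔ ∀ i, ‖(τ h i : ℂ) - 1‖ < 1 / 4)
    (c : H → Fin N) (hc : ∀ x y, c x = c y → ∀ i, ‖(τ x i : ℂ) - τ y i‖ < 1 / 4) :
    Fintype.card H ≤ N * BH.card := by
  classical
  have h1 : ∀ j : Fin N, (univ.filter (fun x => c x = j)).card ≤ BH.card := by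
    intro j
    rcases (univ.filter (fun x => c x = j)).eq_empty_or_nonempty with h | ⟨y, hy⟩
    · rw [h]; simp
    · refine card_le_card_of_injOn (fun x => y⁻¹ * x) ?_ (fun a _ b _ hab => mul_left_cancel hab)
      intro x hx
      have hx' : c x = j := (mem_filter.1 hx).2
      have hy' : c y = j := (mem_filter.1 hy).2
      refine (hBH _).2 fun i => ?_
      have h2 := hc x y (hx'.trans hy'.symm) i
      have h3 : ((τ (y⁻¹ * x) i : Circle) : ℂ) - 1
          = ((τ y i)⁻¹ : Circle) * ((τ x i : ℂ) - τ y i) := by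
        rw [map_mul, map_inv, Pi.mul_apply, Pi.inv_apply, Circle.coe_mul, mul_sub,
          ← Circle.coe_mul (τ y i)⁻¹ (τ y i), inv_mul_cancel, Circle.coe_one]
      show ‖((τ (y⁻¹ * x) i : Circle) : ℂ) - 1‖ < 1 / 4
      rw [h3, norm_mul, Circle.norm_coe, one_mul]
      exact h2
  have h2 := card_eq_sum_card_fiberwise (f := c) (s := univ) (t := univ) (fun x _ => mem_univ _)
  rw [← card_univ, h2]
  calc _ ≤ ∑ _j : Fin N, BH.card := sum_le_sum fun j _ => h1 j
    _ = _ := by simp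

lemma nipDist_four {G : Type*} [Group G] [Fintype G] (A : Set G) (η : ℝ) (x y z w : G)
    (hx : (nipDist A 1 x : ℝ) < η) (hy : (nipDist A 1 y : ℝ) < η)
    (hz : (nipDist A 1 z : ℝ) < η) (hw : (nipDist A 1 w : ℝ) < η) :
    (nipDist A 1 (x * y * (z * w)) : ℝ) < 4 * η := by
  have key : ∀ a b : G, (nipDist A 1 (a * b) : ℝ) ≤ nipDist A 1 a + nipDist A 1 b := by
    intro a b
    have h1 := nipDist_triangle A 1 a (a * b)
    have h2 := nipDist_left A a 1 b
    rw [mul_one] at h2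
    rw [h2] at h1
    exact_mod_cast h1
  have := key (x * y) (z * w)
  have := key x y
  have := key z w
  linarith

lemma nipaux_pad {H : Type*} [Group H] {m : ℕ} (τ0 : H →* (Fin m → Circle)) :
    ∃ τ : H →* (Fin (m + 1) → Circle), ∀ h (j : Fin m), τ h j.succ = τ0 h j := by
  refine ⟨{ toFun := fun h => Fin.cons 1 (τ0 h), map_one' := ?_, map_mul' := ?_ },
    fun h j => rfl⟩
  · ext i
    refine Fin.cases ?_ (fun j => ?_) i <;> simp
  · intro a b
    ext i
    refine Fin.cases ?_ (fun j => ?_) i <;> simp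

universe u


lemma nipaux_spectral_abs {G : Type u} [Group G] [Fintype G] [DecidableEq G] (S : Finset G) (N : ℕ)
    (hN : 0 < N) (hS : Fintype.card G ≤ N * S.card) (hsymm : ∀ g, g ∈ S → g⁻¹ ∈ S) :
    ∃ (V : Type u) (_ : NormedAddCommGroup V) (_ : InnerProductSpace ℂ V)
      (_ : FiniteDimensional ℂ V), Module.finrank ℂ V ≤ 16 * N ^ 4 ∧
      ∃ P : G →* (V →L[ℂ] V), (∀ g v, ‖P g v‖ = ‖v‖) ∧
        ∀ g, (∀ v, ‖P g v - v‖ ≤ 1 / 4 * ‖v‖) →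
          ∃ x ∈ S, ∃ y ∈ S, ∃ z ∈ S, ∃ w ∈ S, g = x * y * (z * w) := by
  obtain ⟨V, hV, P, hP, hPS⟩ := nipaux_spectral S N hN hS hsymm
  exact ⟨V, inferInstance, inferInstance, inferInstance, hV, P, hP, hPS⟩

lemma nipaux_bohr (N : ℕ) (hN : 0 < N) : ∃ N1 n : ℕ, ∀ (G : Type u) [Group G] [Fintype G]
    [DecidableEq G] (S : Finset G), Fintype.card G ≤ N * S.card → (∀ g, g ∈ S → g⁻¹ ∈ S) →
    ∃ H : Subgroup G, H.Normal ∧ H.index ≤ N1 ∧ ∃ m ≤ n, ∃ τ : H →* (Fin m → Circle),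
      ∀ h : H, (∀ i, ‖(τ h i : ℂ) - 1‖ < 1 / 4) →
        ∃ x ∈ S, ∃ y ∈ S, ∃ z ∈ S, ∃ w ∈ S, (h : G) = x * y * (z * w) := by
  obtain ⟨n, hn⟩ : ∃ n : ℕ, n = 16 * N ^ 4 := ⟨_, rfl⟩
  obtain ⟨N1, hjordan⟩ := nipaux_jordan.{u, u} n
  refine ⟨N1, n, ?_⟩
  intro G _ _ _ S hS hsymm
  obtain ⟨V, _, _, _, hV, P, hP, hPS⟩ := nipaux_spectral_abs S N hN hS hsymm
  rw [← hn] at hV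
  obtain ⟨H, hH, hindex, m0, hm0, τ0, hτ0⟩ := hjordan V G P hV hP
  exact ⟨H, hH, hindex, m0, hm0, τ0, fun h hh => hPS h (hτ0 h hh)⟩

end PartG

theorem nip_arithmetic_regularity (d : ℕ) (hd : 1 ≤ d)
    (ε : ℝ) (hε0 : 0 < ε) (hε1 : ε < 1) :
    ∃ C : ℝ, ∀ (G : Type*) [Group G] [Fintype G] (A : Set G),
      vcDim (leftFam A (Set.univ : Set G)) < (d : ℕ∞) →
      ∃ (H : Subgroup G) (δ : ℝ) (m : ℕ) (B : Set G),
        H.Normal ∧ (H.index : ℝ) ≤ C ∧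
        0 < δ ∧ δ < 1 ∧ 1 / δ ≤ C ∧ 1 ≤ m ∧ (m : ℝ) ≤ C ∧
        IsBohrNbhdIn H δ m B ∧
        (∃ F : Set G, (F.ncard : ℝ) ≤ C ∧
          ((A ∆ (F * B)).ncard : ℝ) < ε * Nat.card G) ∧
        (∃ Z : Set G, (Z.ncard : ℝ) ≤ ε * Nat.card G ∧
          ∀ g : G, g ∉ Z →
            (((g • B) ∩ A).ncard : ℝ) < ε * B.ncard ∨
            (((g • B) \ A).ncard : ℝ) < ε * B.ncard) := by
  classical
  have hηpos : 0 < ε ^ 2 / 22 / 4 := by positivity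
  have hηlt : ε ^ 2 / 22 / 4 < 1 := by nlinarith
  obtain ⟨N, hN, hcover⟩ := nipaux_cover (2 ^ d) (ε ^ 2 / 22 / 4) hηpos hηlt
  obtain ⟨N1, n, hbohr⟩ := nipaux_bohr N hN
  obtain ⟨N2, hcolor⟩ := nipaux_color (n + 1) (1 / 4) (by norm_num)
  have hC0 : (0 : ℝ) ≤ 8 / ε * (N1 * N2 : ℝ) := by positivity
  refine ⟨N1 + 4 + (n + 1) + (8 / ε * (N1 * N2 : ℝ) + 1), ?_⟩
  intro G _ _ A hA
  have hS := hcover G A (nipaux_dual A d hA)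
  obtain ⟨S, hSd⟩ : ∃ S : Finset G, S = Finset.univ.filter
    (fun g : G => (nipDist A 1 g : ℝ) < ε ^ 2 / 22 / 4 * Fintype.card G) := ⟨_, rfl⟩
  rw [← hSd] at hS
  have hmemS : ∀ g, g ∈ S ↔ (nipDist A 1 g : ℝ) < ε ^ 2 / 22 / 4 * Fintype.card G := by
    intro g; rw [hSd]; simp
  have hsymmS : ∀ g, g ∈ S → g⁻¹ ∈ S := by
    intro g hg
    rw [hmemS] at hg ⊢
    have h1 := nipDist_left A g 1 g⁻¹
    rw [mul_one, mul_inv_cancel, nipDist_comm] at h1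
    rwa [← h1]
  obtain ⟨H, hH, hindex, m0, hm0, τ0, hτ0⟩ := hbohr G S hS hsymmS
  obtain ⟨τ, hτs⟩ := nipaux_pad τ0
  obtain ⟨BH, hBH⟩ : ∃ BH : Finset H, ∀ h, h ∈ BH ↔ ∀ i, ‖(τ h i : ℂ) - 1‖ < 1 / 4 :=
    ⟨Finset.univ.filter (fun h => ∀ i, ‖(τ h i : ℂ) - 1‖ < 1 / 4), fun h => by simp⟩
  obtain ⟨col, hcol⟩ := hcolor (Fin (m0 + 1)) (by simpa using hm0) H (fun h i => (τ h i : ℂ))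
    (fun h i => by rw [Circle.norm_coe])
  have hlarge := nipaux_bohr_large (m0 + 1) N2 τ BH hBH col hcol
  obtain ⟨B, hB⟩ : ∃ B : Finset G, B = BH.image (fun h : H => (h : G)) := ⟨_, rfl⟩
  have hBcard : B.card = BH.card := by
    rw [hB]; exact Finset.card_image_of_injective _ Subtype.val_injective
  have hGB : (Fintype.card G : ℝ) ≤ (N1 * N2 : ℝ) * B.card := by
    have h1 := H.card_mul_index
    rw [Nat.card_eq_fintype_card, Nat.card_eq_fintype_card] at h1
    have h2 : Fintype.card G ≤ N1 * N2 * B.card := by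
      rw [← h1, hBcard]
      calc _ ≤ (N2 * BH.card) * N1 := Nat.mul_le_mul hlarge hindex
        _ = _ := by ring
    exact_mod_cast h2
  have hBpos : 0 < B.card := by
    rw [Finset.card_pos, hB]
    refine ⟨((1 : H) : G), Finset.mem_image.2 ⟨1, (hBH _).2 fun i => ?_, rfl⟩⟩
    simp
  have hBsymm : ∀ b, b ∈ B → b⁻¹ ∈ B := by
    intro b hb
    rw [hB] at hb
    obtain ⟨h, hh, rfl⟩ := Finset.mem_image.1 hb
    rw [hB]
    refine Finset.mem_image.2 ⟨h⁻¹, (hBH _).2 fun i => ?_, rfl⟩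
    have h1 := (hBH _).1 hh i
    have h3 : ((τ h⁻¹ i : Circle) : ℂ) - 1
        = ((τ h i)⁻¹ : Circle) * (1 - (τ h i : ℂ)) := by
      rw [map_inv, Pi.inv_apply, mul_sub,
        ← Circle.coe_mul (τ h i)⁻¹ (τ h i), inv_mul_cancel, Circle.coe_one, mul_one]
    rw [h3, norm_mul, Circle.norm_coe, one_mul, norm_sub_rev]
    exact h1
  have hBA : ∀ b ∈ B, ((Finset.univ.filter (fun x => ¬(x ∈ A.toFinset ↔ x * b ∈ A.toFinset))).card : ℝ)
      ≤ ε ^ 2 / 22 * Fintype.card G := by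
    intro b hb
    rw [hB] at hb
    obtain ⟨h, hh, rfl⟩ := Finset.mem_image.1 hb
    have h1 := (hBH _).1 hh
    obtain ⟨x, hx, y, hy, z, hz, w, hw, hg⟩ := hτ0 h
      (fun i => by have := h1 i.succ; rwa [hτs] at this)
    have h2 := nipDist_four A _ x y z w ((hmemS _).1 hx) ((hmemS _).1 hy) ((hmemS _).1 hz)
      ((hmemS _).1 hw)
    rw [← hg] at h2
    have h3 : nipDist A 1 (h : G)
        = (Finset.univ.filter (fun x => ¬(x ∈ A.toFinset ↔ x * (h : G) ∈ A.toFinset))).card := by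
      unfold nipDist
      congr 1
      ext x
      simp
    rw [← h3]
    linarith
  obtain ⟨Z, hZ1, hZ2⟩ := nipaux_regular A.toFinset B ε (ε ^ 2 / 22) hε0
    (by nlinarith [sq_nonneg ε]) hBpos hBA
  obtain ⟨F, hF1, hF2⟩ := nipaux_structure A.toFinset B ε (ε ^ 2 / 22) (N1 * N2) hε0 hε1 rfl hBpos
    hGB hBsymm hBA
  have hn0 : (0 : ℝ) ≤ (n : ℝ) := Nat.cast_nonneg _
  have hN10 : (0 : ℝ) ≤ (N1 : ℝ) := Nat.cast_nonneg _
  refine ⟨H, 1 / 4, m0 + 1, (B : Set G), hH, ?_, by norm_num, by norm_num, ?_, by omega, ?_,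
    ⟨τ, ?_⟩, ⟨(F : Set G), ?_, ?_⟩, ⟨(Z : Set G), ?_, ?_⟩⟩
  · have : (H.index : ℝ) ≤ N1 := by exact_mod_cast hindex
    linarith
  · norm_num; linarith
  · have : (m0 : ℝ) ≤ n := by exact_mod_cast hm0
    push_cast
    linarith
  · ext g
    simp only [hB, Finset.coe_image, Set.mem_image, Finset.mem_coe, hBH, Set.mem_ofPred_eq]
    constructor
    · rintro ⟨h, h1, h2⟩; exact ⟨h, h2, h1⟩
    · rintro ⟨h, h1, h2⟩; exact ⟨h, h2, h1⟩
  · rw [Set.ncard_coe_finset]; linarith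
  · have : A ∆ ((F : Set G) * (B : Set G)) = ((A.toFinset ∆ (F * B) : Finset G) : Set G) := by
      rw [Finset.coe_symmDiff, Finset.coe_mul, Set.coe_toFinset]
    rw [this, Set.ncard_coe_finset, Nat.card_eq_fintype_card]
    exact hF2
  · rw [Set.ncard_coe_finset, Nat.card_eq_fintype_card]; exact hZ1
  · intro g hg
    have h1 : (g • (B : Set G)) ∩ A = (((g • B) ∩ A.toFinset : Finset G) : Set G) := by
      rw [Finset.coe_inter, Finset.coe_smul_finset, Set.coe_toFinset]
    have h2 : (g • (B : Set G)) \ A = (((g • B) \ A.toFinset : Finset G) : Set G) := by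
      rw [Finset.coe_sdiff, Finset.coe_smul_finset, Set.coe_toFinset]
    rw [h1, h2, Set.ncard_coe_finset, Set.ncard_coe_finset, Set.ncard_coe_finset]
    exact hZ2 g (by simpa using hg)
end
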